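/- There exist absolute constants C0, c0 > 0 such that the following holds. Let φ : ℝ → ℝ be an L-Lipschitz, non-negative activation with E_{t∼N(0,1)}[φ(t)] ≥ C, E_{t∼N(0,1)}[φ(t)(t²−1)] ≥ C for some C > 0, and E_{t∼N(0,1)}[φ(t)²] < ∞. For all integers d, k ≥ 1, all ε ∈ (0,1) and all σ ≥ 0, there is a sample size m ≤ d · (k·(1 + L/C)/ε)^{C0} and a (measurable) estimator A : (ℝ^d × ℝ)^m → ℝ^{ℝ^d} whose outputs are of the form h(x) = Σ_{i=1}^k β_i φ(⟨v^{(i)}, x⟩) with β_i > 0 and unit v^{(i)}, such that: for every f(x) = Σ_{i=1}^k α_i φ(⟨w^{(i)}, x⟩) with α_i > 0 and unit w^{(i)}, and i.i.d. samples (x^{(j)}, y^{(j)}) with x^{(j)} ∼ N^d and y^{(j)} = f(x^{(j)}) + ξ_j, ξ_j zero-mean σ-subgaussian independent of x^{(j)}, with probability at least 9/10 the output h satisfies E_{x∼N^d}[(f(x) − h(x))²] ≤ ε² · (1 + L/C)^{c0} · (σ² + E_{x∼N^d}[f(x)²]). -/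

import Mathlib

/-!
The estimator is a penalised least squares over a countable class, fed with robust estimates of
correlations. Write `a = E φ ≥ C` and `K = 1 + L / C`. Since `φ ≥ 0` and `α > 0`, no cancellation
occurs: `a ∑ α i = E f ≤ ‖f‖`, so the total coefficient mass of a network is controlled by its
`L²` norm. The Lipschitz bound gives `φ t ≤ a K (1 + |t|)`, hence all fourth moments that are needed
are `O((a K)^4)`.

* `exists_net`: the unit sphere has a `δ`-net `N` with at most `(3 / δ)^d` points, where
  `δ = ε / (8 K)`. Moving the directions of `f` to `N`, and its coefficients to slightly smaller
  rationals, changes `f` by at most `(ε / 4) ‖f‖` in `L²` (`Act.exists_cand`).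
* `median_of_means`: for each `v ∈ N`, the variable `y φ⟨v, x⟩` has mean `E [f φ⟨v, ·⟩]` and second
  moment `O(K^4 a² (σ² + ‖f‖²))` (`Act.sample_moments`). The median of `2 d` block means, with blocks
  of size `b ≍ (K / ε)^5`, is accurate to `ε² a ρ / 32`, `ρ² = σ² + ‖f‖²`, except with probability
  `(c (K / ε)^4 / b)^d`. Having `2 d` blocks makes this small enough for a union bound over `N`, while
  the number of samples stays linear in `d` (`Act.bad_event_le`).
* For a candidate `h = ∑ β i φ⟨v i, ·⟩` with `v i ∈ N`, replacing correlations by their estimates in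
  `‖h‖² - 2 ⟨f, h⟩` costs at most `2 τ ∑ β i`, with `τ` the accuracy, and `a ∑ β i = E h` is at most
  `ρ + ‖f - h‖`. So a near minimiser of the estimated criterion has risk at most `ε² ρ²`
  (`Act.risk_le`).

The threshold for being a near minimiser has to be computable from the data and from `σ` alone,
whereas the natural scale `ρ` is unknown. The rule
`J n ≤ (1 - η) J j + η σ²` for all `j` is scale free: `inf J < σ²` on the good event, so such an `n`
exists, and `J n` exceeds `J j` by at most `η (σ² - J j) ≲ η ρ²`. The first such index is measurable.

The Hermite condition on `φ` is used only through `L / C ≥ 1 / 48`: it makes `K / ε` bounded away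
from `1`, so that absolute constants are absorbed into a power of `K / ε`.
-/

open MeasureTheory ProbabilityTheory Real Finset

noncomputable def stdGaussian (d : ℕ) : Measure (Fin d → ℝ) :=
  Measure.pi fun _ => gaussianReal 0 1

/-- One-hidden-layer network with activation `φ`: `x ↦ ∑ i, α i * φ ⟨w i, x⟩`. -/
noncomputable def phiNet (φ : ℝ → ℝ) {d k : ℕ} (α : Fin k → ℝ) (w : Fin k → Fin d → ℝ)
    (x : Fin d → ℝ) : ℝ :=
  ∑ i, α i * φ (∑ j, w i j * x j)

/-- `ν` is a zero-mean `σ`-subgaussian probability distribution on `ℝ`. -/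
def IsZeroMeanSubgaussian (ν : Measure ℝ) (σ : ℝ) : Prop :=
  IsProbabilityMeasure ν ∧ (∫ t, t ∂ν) = 0 ∧
    ∀ l : ℝ, Integrable (fun t => Real.exp (l * t)) ν ∧
      (∫ t, Real.exp (l * t) ∂ν) ≤ Real.exp (l ^ 2 * σ ^ 2 / 2)

/-- Distribution of `m` i.i.d. labeled samples `(x, f x + ξ)`, `x ∼ N^d`, `ξ ∼ ν`. -/
noncomputable def sampleMeasure (d m : ℕ) (f : (Fin d → ℝ) → ℝ) (ν : Measure ℝ) :
    Measure (Fin m → (Fin d → ℝ) × ℝ) :=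
  Measure.pi fun _ =>
    Measure.map (fun p : (Fin d → ℝ) × ℝ => (p.1, f p.1 + p.2)) ((stdGaussian d).prod ν)

/-! ### Median of means -/

/-- A measurable median of `2 d` numbers: it lies in every interval containing more than half of
them. It is the `(d + 1)`-st smallest number, written as a minimum of maxima over `(d + 1)`-subsets. -/
lemma exists_median (d : ℕ) (hd : 1 ≤ d) :
    ∃ med : (Fin (2 * d) → ℝ) → ℝ, Measurable med ∧
      ∀ (z : Fin (2 * d) → ℝ) (c τ : ℝ),
        d < (univ.filter fun i => |z i - c| ≤ τ).card → |med z - c| ≤ τ := by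
  let I := {A : Finset (Fin (2 * d)) // A.card = d + 1}
  have hI : Nonempty I := by
    obtain ⟨A, -, hA⟩ := Finset.exists_subset_card_eq (s := (univ : Finset (Fin (2 * d))))
      (n := d + 1) (by simp; omega)
    exact ⟨⟨A, hA⟩⟩
  refine ⟨fun z => ⨅ A : I, ⨆ i : A.1, z i, ?_, ?_⟩
  · exact Measurable.iInf fun A => Measurable.iSup fun i => measurable_pi_apply _
  · intro z c τ hz
    set Gd := univ.filter fun i => |z i - c| ≤ τ with hG
    rw [abs_le]
    constructor
    · have : c - τ ≤ ⨅ A : I, ⨆ i : A.1, z i := by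
        refine le_ciInf fun A => ?_
        have hne : (A.1 ∩ Gd).Nonempty := by
          by_contra h
          rw [Finset.not_nonempty_iff_eq_empty] at h
          have h1 := Finset.card_union_add_card_inter A.1 Gd
          have h2 := Finset.card_le_univ (A.1 ∪ Gd)
          rw [h, Finset.card_empty, A.2] at h1
          simp only [Fintype.card_fin] at h2
          omega
        obtain ⟨i, hi⟩ := hne
        rw [Finset.mem_inter] at hi
        have h1 : |z i - c| ≤ τ := (Finset.mem_filter.1 hi.2).2
        have h2 : z i ≤ ⨆ i : A.1, z i :=
          le_ciSup (f := fun i : A.1 => z i) (Set.finite_range _).bddAbove ⟨i, hi.1⟩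
        linarith [(abs_le.1 h1).1]
      linarith
    · have : (⨅ A : I, ⨆ i : A.1, z i) ≤ c + τ := by
        obtain ⟨A, hAG, hA⟩ := Finset.exists_subset_card_eq (s := Gd) (n := d + 1) (by omega)
        refine (ciInf_le (Set.finite_range _).bddBelow (⟨A, hA⟩ : I)).trans ?_
        have hne : Nonempty A := by
          have : A.Nonempty := Finset.card_pos.1 (by omega)
          exact this.to_subtype
        refine ciSup_le fun i => ?_
        have h1 : |z i - c| ≤ τ := (Finset.mem_filter.1 (hAG i.2)).2
        linarith [(abs_le.1 h1).2]
      linarith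

/-- Chebyshev's inequality for the mean of one block of `b` independent samples. -/
lemma block_chebyshev {X : Type*} [MeasurableSpace X] (P : Measure X) [IsProbabilityMeasure P]
    {Z : X → ℝ} (hZ : MemLp Z 2 P) {V τ : ℝ} (hV : ∫ x, Z x ^ 2 ∂P ≤ V) (hτ : 0 < τ)
    {b : ℕ} (hb : 0 < b) :
    (Measure.pi fun _ : Fin b => P) {s | τ < |(∑ j, Z (s j)) / b - ∫ x, Z x ∂P|}
      ≤ ENNReal.ofReal (V / (b * τ ^ 2)) := by
  have hb' : (0 : ℝ) < b := by exact_mod_cast hb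
  have hmem : ∀ j : Fin b, MemLp (fun s : Fin b → X => Z (s j)) 2 (Measure.pi fun _ : Fin b => P) :=
    fun j => hZ.comp_measurePreserving (measurePreserving_eval _ j)
  have hS : MemLp (∑ j : Fin b, fun s : Fin b → X => Z (s j)) 2 (Measure.pi fun _ : Fin b => P) :=
    memLp_finsetSum' _ fun j _ => hmem j
  have hvar := variance_sum_pi (μ := fun _ : Fin b => P) (X := fun _ => Z) fun _ => hZ
  have h_mean : ∫ s, (∑ j : Fin b, fun s : Fin b → X => Z (s j)) s ∂(Measure.pi fun _ : Fin b => P)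
      = b * ∫ x, Z x ∂P := by
    simp only [Finset.sum_apply]
    rw [integral_finsetSum _ fun j _ => (hmem j).integrable (by norm_num)]
    have : ∀ j : Fin b, ∫ s : Fin b → X, Z (s j) ∂(Measure.pi fun _ : Fin b => P) = ∫ x, Z x ∂P := by
      intro j
      exact integral_comp_eval (μ := fun _ : Fin b => P) (i := j) (f := Z) hZ.aestronglyMeasurable
    simp [this]
  have key := meas_ge_le_variance_div_sq hS (c := b * τ) (by positivity)
  rw [hvar, h_mean] at key
  refine (measure_mono ?_).trans (key.trans (ENNReal.ofReal_le_ofReal ?_))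
  · intro s hs
    simp only [Set.mem_ofPred_eq, Finset.sum_apply] at hs ⊢
    have : (∑ j, Z (s j)) - b * ∫ x, Z x ∂P = b * ((∑ j, Z (s j)) / b - ∫ x, Z x ∂P) := by
      field_simp
    rw [this, abs_mul, abs_of_pos hb']
    gcongr
  · have hv : Var[Z; P] ≤ V := (variance_le_expectation_sq hZ.aestronglyMeasurable).trans hV
    simp only [Finset.sum_const, Finset.card_univ, Fintype.card_fin, nsmul_eq_mul]
    rw [div_le_div_iff₀ (by positivity) (by positivity)]
    have : 0 ≤ (b : ℝ) * b * τ ^ 2 := by positivity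
    nlinarith [mul_le_mul_of_nonneg_right hv this]

/-- Cutting `B * b` independent samples into blocks gives `B` independent blocks. -/
lemma measurePreserving_blocks {X : Type*} [MeasurableSpace X] (P : Measure X)
    [IsProbabilityMeasure P] (B b : ℕ) :
    MeasurePreserving (fun (s : Fin (B * b) → X) (i : Fin B) (j : Fin b) => s (finProdFinEquiv (i, j)))
      (Measure.pi fun _ => P) (Measure.pi fun _ => Measure.pi fun _ => P) := by
  have h1 : MeasurePreserving (MeasurableEquiv.curry (Fin B) (Fin b) X)
      (Measure.pi fun _ => P) (Measure.pi fun _ => Measure.pi fun _ => P) := by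
    refine ⟨by fun_prop, ?_⟩
    have := Measure.infinitePi_map_curry (fun (_ : Fin B) (_ : Fin b) => P)
    simpa only [Measure.infinitePi_eq_pi] using this
  have h2 := (measurePreserving_piCongrLeft (fun _ : Fin B × Fin b => P)
    (finProdFinEquiv (m := B) (n := b)).symm)
  have h3 := h1.comp h2
  convert h3 using 1
  ext s i j
  simp [MeasurableEquiv.curry, MeasurableEquiv.piCongrLeft, Equiv.piCongrLeft, Equiv.piCongrLeft']

/-- If a median of `2 d` block means is off by more than `τ`, then at least `d` of the independent
blocks are; a union bound over the at most `4 ^ d` sets of `d` blocks concludes. -/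
lemma median_of_means {X : Type*} [MeasurableSpace X] (P : Measure X) [IsProbabilityMeasure P]
    (d b : ℕ) (hb : 0 < b) (med : (Fin (2 * d) → ℝ) → ℝ)
    (hmed : ∀ (z : Fin (2 * d) → ℝ) (c τ : ℝ),
        d < (univ.filter fun i => |z i - c| ≤ τ).card → |med z - c| ≤ τ)
    {Z : X → ℝ} (hZm : Measurable Z) (hZ : MemLp Z 2 P) {V τ : ℝ} (hV : ∫ x, Z x ^ 2 ∂P ≤ V)
    (hτ : 0 < τ) :
    (Measure.pi fun _ : Fin (2 * d * b) => P)
      {s | τ < |med (fun i => (∑ j : Fin b, Z (s (finProdFinEquiv (i, j)))) / b) - ∫ x, Z x ∂P|}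
      ≤ ENNReal.ofReal ((4 * (V / (b * τ ^ 2))) ^ d) := by
  set c := ∫ x, Z x ∂P with hc
  set p := V / (b * τ ^ 2) with hp
  have hV0 : 0 ≤ V := (integral_nonneg fun x => sq_nonneg _).trans hV
  have hp0 : 0 ≤ p := by positivity
  set Bad : Set (Fin b → X) := {s | τ < |(∑ j, Z (s j)) / b - c|} with hBad
  have hBadm : MeasurableSet Bad := measurableSet_lt measurable_const (by fun_prop)
  have hmp := measurePreserving_blocks P (2 * d) b
  have hsub : {s : Fin (2 * d * b) → X |
      τ < |med (fun i => (∑ j : Fin b, Z (s (finProdFinEquiv (i, j)))) / b) - c|} ⊆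
      ⋃ A ∈ (univ : Finset (Fin (2 * d))).powersetCard d,
        (fun (s : Fin (2 * d * b) → X) (i : Fin (2 * d)) (j : Fin b) => s (finProdFinEquiv (i, j))) ⁻¹'
          (Set.univ.pi fun i => if i ∈ A then Bad else Set.univ) := by
    intro s hs
    simp only [Set.mem_ofPred_eq] at hs
    have h1 : ¬ d < (univ.filter fun i : Fin (2 * d) =>
        |(∑ j : Fin b, Z (s (finProdFinEquiv (i, j)))) / b - c| ≤ τ).card :=
      fun h => absurd (hmed _ c τ h) (not_le.2 hs)
    have h2 := Finset.card_filter_add_card_filter_not (s := (univ : Finset (Fin (2 * d))))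
      (fun i : Fin (2 * d) => |(∑ j : Fin b, Z (s (finProdFinEquiv (i, j)))) / b - c| ≤ τ)
    simp only [Finset.card_univ, Fintype.card_fin] at h2
    obtain ⟨A, hA, hAc⟩ := Finset.exists_subset_card_eq (n := d) (s := univ.filter fun i : Fin (2 * d) =>
        ¬ |(∑ j : Fin b, Z (s (finProdFinEquiv (i, j)))) / b - c| ≤ τ) (by omega)
    simp only [Set.mem_iUnion, Finset.mem_powersetCard]
    refine ⟨A, ⟨Finset.subset_univ _, hAc⟩, ?_⟩
    simp only [Set.mem_preimage, Set.mem_univ_pi]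
    intro i
    split_ifs with hi
    · have := (Finset.mem_filter.1 (hA hi)).2
      exact not_le.1 this
    · trivial
  refine (measure_mono hsub).trans ((measure_biUnion_finset_le _ _).trans ?_)
  have heach : ∀ A ∈ (univ : Finset (Fin (2 * d))).powersetCard d,
      (Measure.pi fun _ : Fin (2 * d * b) => P)
        ((fun (s : Fin (2 * d * b) → X) (i : Fin (2 * d)) (j : Fin b) => s (finProdFinEquiv (i, j))) ⁻¹'
          (Set.univ.pi fun i => if i ∈ A then Bad else Set.univ)) ≤ ENNReal.ofReal (p ^ d) := by
    intro A hA
    rw [hmp.measure_preimage (MeasurableSet.univ_pi fun i => by split_ifs <;> measurability).nullMeasurableSet,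
      Measure.pi_pi]
    have : ∀ i : Fin (2 * d), (Measure.pi fun _ : Fin b => P) (if i ∈ A then Bad else Set.univ)
        = if i ∈ A then (Measure.pi fun _ : Fin b => P) Bad else 1 := by
      intro i; split_ifs <;> simp
    simp only [this]
    rw [Finset.prod_ite_mem, Finset.univ_inter, Finset.prod_const, (Finset.mem_powersetCard.1 hA).2,
      ENNReal.ofReal_pow hp0]
    gcongr
    exact block_chebyshev P hZ hV hτ hb
  refine (Finset.sum_le_sum heach).trans ?_
  rw [Finset.sum_const, Finset.card_powersetCard, Finset.card_univ, Fintype.card_fin, nsmul_eq_mul,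
    mul_pow, ENNReal.ofReal_mul (by positivity)]
  gcongr
  have : ((2 * d).choose d : ℝ) ≤ 4 ^ d := by
    have h := Nat.choose_le_two_pow (2 * d) d
    rw [pow_mul] at h
    exact_mod_cast h
  rw [← ENNReal.ofReal_natCast]
  exact ENNReal.ofReal_le_ofReal this

/-! ### Nets of the unit sphere -/

open Metric in
/-- Volume bound: the balls of radius `δ / 2` around the points are disjoint and lie in the ball of
radius `3 / 2`. -/
lemma card_le_of_separated_sphere {d : ℕ} {δ : ℝ} (hδ : 0 < δ) (hδ1 : δ ≤ 1)
    (s : Finset (EuclideanSpace ℝ (Fin d))) (hs : ∀ c ∈ s, ‖c‖ = 1)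
    (h : ∀ c ∈ s, ∀ e ∈ s, c ≠ e → δ ≤ ‖c - e‖) : (s.card : ℝ) ≤ (3 / δ) ^ d := by
  let E := EuclideanSpace ℝ (Fin d)
  let μ : Measure E := volume
  set A := ⋃ c ∈ s, ball (c : E) (δ / 2) with hA
  have D : Set.PairwiseDisjoint (s : Set E) fun c => ball (c : E) (δ / 2) := by
    rintro c hc e he hce
    apply ball_disjoint_ball
    rw [dist_eq_norm]
    linarith [h c hc e he hce]
  have A_subset : A ⊆ ball (0 : E) (3 / 2) := by
    refine Set.iUnion₂_subset fun x hx => ball_subset_ball' ?_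
    rw [dist_zero_right, hs x hx]
    linarith
  have hfr : Module.finrank ℝ E = d := by simp [E]
  have I : (s.card : ENNReal) * ENNReal.ofReal ((δ / 2) ^ d) * μ (ball 0 1) ≤
      ENNReal.ofReal ((3 / 2) ^ d) * μ (ball 0 1) :=
    calc
      (s.card : ENNReal) * ENNReal.ofReal ((δ / 2) ^ d) * μ (ball 0 1) = μ A := by
        rw [hA, measure_biUnion_finset D fun c _ => measurableSet_ball]
        simp only [μ.addHaar_ball_of_pos _ (half_pos hδ), hfr]
        simp only [Finset.sum_const, nsmul_eq_mul, mul_assoc]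
      _ ≤ μ (ball (0 : E) (3 / 2)) := measure_mono A_subset
      _ = ENNReal.ofReal ((3 / 2) ^ d) * μ (ball 0 1) := by
        simp only [μ.addHaar_ball_of_pos (0 : E) (by norm_num : (0 : ℝ) < 3 / 2), hfr]
  have J : (s.card : ENNReal) * ENNReal.ofReal ((δ / 2) ^ d) ≤ ENNReal.ofReal ((3 / 2) ^ d) :=
    (ENNReal.mul_le_mul_iff_left (measure_ball_pos _ _ zero_lt_one).ne' measure_ball_lt_top.ne).1 I
  have K := ENNReal.toReal_le_of_le_ofReal (by positivity) J
  rw [ENNReal.toReal_mul, ENNReal.toReal_ofReal (by positivity), ENNReal.toReal_natCast] at K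
  rw [show (3 / δ : ℝ) = (3 / 2) / (δ / 2) by field_simp, div_pow, le_div_iff₀ (by positivity)]
  exact K

/-- A `δ`-separated subset of the sphere of maximal cardinality is a `δ`-net. -/
lemma exists_net (d : ℕ) {δ : ℝ} (hδ : 0 < δ) (hδ1 : δ ≤ 1) :
    ∃ N : Finset (Fin d → ℝ), (∀ v ∈ N, ∑ j, v j ^ 2 = 1) ∧
      (∀ w : Fin d → ℝ, ∑ j, w j ^ 2 = 1 → ∃ v ∈ N, ∑ j, (w j - v j) ^ 2 ≤ δ ^ 2) ∧
      (N.card : ℝ) ≤ (3 / δ) ^ d := by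
  let Good : Finset (EuclideanSpace ℝ (Fin d)) → Prop := fun s =>
    (∀ c ∈ s, ‖c‖ = 1) ∧ ∀ c ∈ s, ∀ e ∈ s, c ≠ e → δ ≤ ‖c - e‖
  let S : Set ℕ := {n | ∃ s, Good s ∧ s.card = n}
  have hbd : BddAbove S := by
    refine ⟨⌈(3 / δ) ^ d⌉₊, ?_⟩
    rintro n ⟨s, hs, rfl⟩
    exact_mod_cast (card_le_of_separated_sphere hδ hδ1 s hs.1 hs.2).trans (Nat.le_ceil _)
  have hne : S.Nonempty := ⟨0, ∅, ⟨by simp, by simp⟩, by simp⟩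
  obtain ⟨s, hs, hcard⟩ := Nat.sSup_mem hne hbd
  have hmax : ∀ t, Good t → t.card ≤ s.card := fun t ht => hcard ▸ le_csSup hbd ⟨t, ht, rfl⟩
  refine ⟨s.map (WithLp.equiv 2 (Fin d → ℝ)).toEmbedding, ?_, ?_, ?_⟩
  · intro v hv
    obtain ⟨c, hc, rfl⟩ := Finset.mem_map.1 hv
    have := EuclideanSpace.real_norm_sq_eq c
    rw [hs.1 c hc] at this
    simpa using this.symm
  · intro w hw
    have hw1 : ‖(WithLp.toLp 2 w : EuclideanSpace ℝ (Fin d))‖ = 1 := by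
      have := EuclideanSpace.real_norm_sq_eq (WithLp.toLp 2 w : EuclideanSpace ℝ (Fin d))
      simp only [hw] at this
      nlinarith [norm_nonneg (WithLp.toLp 2 w : EuclideanSpace ℝ (Fin d))]
    obtain ⟨c, hc, hcw⟩ : ∃ c ∈ s, ‖(WithLp.toLp 2 w : EuclideanSpace ℝ (Fin d)) - c‖ ≤ δ := by
      by_contra! hcon
      classical
      have hnot : (WithLp.toLp 2 w : EuclideanSpace ℝ (Fin d)) ∉ s := by
        intro hmem
        have := hcon _ hmem
        simp at this
        linarith
      have := hmax (insert (WithLp.toLp 2 w) s) ⟨?_, ?_⟩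
      · rw [Finset.card_insert_of_notMem hnot] at this
        omega
      · intro c hc
        rcases Finset.mem_insert.1 hc with rfl | hc
        · exact hw1
        · exact hs.1 c hc
      · intro c hc e he hce
        rcases Finset.mem_insert.1 hc with rfl | hc <;> rcases Finset.mem_insert.1 he with rfl | he
        · exact absurd rfl hce
        · exact (hcon e he).le
        · rw [norm_sub_rev]; exact (hcon c hc).le
        · exact hs.2 c hc e he hce
    refine ⟨WithLp.equiv 2 _ c, Finset.mem_map_of_mem _ hc, ?_⟩
    have := EuclideanSpace.real_norm_sq_eq ((WithLp.toLp 2 w : EuclideanSpace ℝ (Fin d)) - c)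
    simp only [PiLp.sub_apply] at this
    simp only [WithLp.equiv_apply]
    rw [← this]
    gcongr
  · rw [Finset.card_map]
    exact card_le_of_separated_sphere hδ hδ1 s hs.1 hs.2

/-! ### Gaussian and subgaussian moments -/

instance (d : ℕ) : IsProbabilityMeasure (_root_.stdGaussian d) := by
  unfold _root_.stdGaussian; infer_instance

lemma map_dot (d : ℕ) (u : Fin d → ℝ) :
    (_root_.stdGaussian d).map (fun x => ∑ j, u j * x j)
      = gaussianReal 0 (∑ j, u j ^ 2).toNNReal := by
  let L : StrongDual ℝ (EuclideanSpace ℝ (Fin d)) := innerSL ℝ (WithLp.toLp 2 u)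
  have h := IsGaussian.map_eq_gaussianReal (μ := ProbabilityTheory.stdGaussian (EuclideanSpace ℝ (Fin d))) L
  rw [integral_strongDual_stdGaussian, variance_dual_stdGaussian,
    ← map_pi_eq_stdGaussian, Measure.map_map (by fun_prop) (by fun_prop)] at h
  have hL : (L ∘ WithLp.toLp 2 : (Fin d → ℝ) → ℝ) = fun x => ∑ j, u j * x j := by
    ext x
    simp [L, PiLp.inner_apply, mul_comm]
  have hn : ‖L‖ ^ 2 = ∑ j, u j ^ 2 := by
    simp only [L, innerSL_apply_norm, EuclideanSpace.real_norm_sq_eq]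
  rw [hL, hn] at h
  exact h

lemma mp_dot {d : ℕ} {u : Fin d → ℝ} (hu : ∑ j, u j ^ 2 = 1) :
    MeasurePreserving (fun x => ∑ j, u j * x j) (_root_.stdGaussian d) (gaussianReal 0 1) :=
  ⟨by fun_prop, by rw [map_dot, hu, Real.toNNReal_one]⟩

lemma integral_dot_sq {d : ℕ} (u : Fin d → ℝ) :
    ∫ x, (∑ j, u j * x j) ^ 2 ∂(_root_.stdGaussian d) = ∑ j, u j ^ 2 := by
  have h0 : 0 ≤ ∑ j, u j ^ 2 := Finset.sum_nonneg fun j _ => sq_nonneg _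
  have h := integral_map (μ := _root_.stdGaussian d) (φ := fun x => ∑ j, u j * x j)
    (f := fun t : ℝ => t ^ 2) (Measurable.aemeasurable (by fun_prop)) (by fun_prop)
  rw [← h, map_dot]
  have hv := variance_fun_id_gaussianReal (μ := 0) (v := (∑ j, u j ^ 2).toNNReal)
  rw [variance_of_integral_eq_zero (by fun_prop) (by simp)] at hv
  rw [hv, Real.coe_toNNReal _ h0]

lemma memLp_dot {d : ℕ} (u : Fin d → ℝ) :
    MemLp (fun x => ∑ j, u j * x j) 2 (_root_.stdGaussian d) := by
  have h : MemLp (fun t : ℝ => t) 2 ((_root_.stdGaussian d).map (fun x => ∑ j, u j * x j)) := by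
    rw [map_dot]; exact memLp_id_gaussianReal 2
  exact h.comp_of_map (Measurable.aemeasurable (by fun_prop))

lemma pow_le_exp_add_exp (n : ℕ) (x : ℝ) (hn : Even n) :
    x ^ n ≤ n.factorial * (Real.exp x + Real.exp (-x)) := by
  have h1 := Real.pow_div_factorial_le_exp |x| (abs_nonneg x) n
  rw [hn.pow_abs, div_le_iff₀ (by positivity)] at h1
  have h2 : Real.exp |x| ≤ Real.exp x + Real.exp (-x) := by
    rcases abs_cases x with ⟨h, -⟩ | ⟨h, -⟩ <;> rw [h] <;> linarith [Real.exp_pos x, Real.exp_pos (-x)]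
  calc x ^ n ≤ Real.exp |x| * n.factorial := h1
    _ ≤ _ := by rw [mul_comm]; gcongr

lemma exp_half_le : Real.exp (1 / 2) ≤ 2 := by
  have h := Real.exp_one_lt_d9
  have h2 : Real.exp (1 / 2) ^ 2 = Real.exp 1 := by rw [← Real.exp_nat_mul]; norm_num
  nlinarith [Real.exp_pos (1 / 2)]

lemma integrable_pow_gaussian (n : ℕ) : Integrable (fun t : ℝ => |t| ^ n) (gaussianReal 0 1) := by
  have := (memLp_id_gaussianReal (μ := 0) (v := 1) n).integrable_norm_pow'
  simpa using this

lemma integral_sq_gaussian : ∫ t, t ^ 2 ∂gaussianReal 0 1 = 1 := by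
  have hv := variance_fun_id_gaussianReal (μ := 0) (v := 1)
  rw [variance_of_integral_eq_zero (by fun_prop) (by simp)] at hv
  simpa using hv

lemma integral_pow_four_gaussian : ∫ t, t ^ 4 ∂gaussianReal 0 1 ≤ 96 := by
  have hi : ∀ l : ℝ, Integrable (fun t => Real.exp (l * t)) (gaussianReal 0 1) :=
    integrable_exp_mul_gaussianReal
  have hm : ∀ l : ℝ, ∫ t, Real.exp (l * t) ∂gaussianReal 0 1 = Real.exp (l ^ 2 / 2) := by
    intro l
    have := congrFun (mgf_fun_id_gaussianReal (μ := 0) (v := 1)) l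
    simpa [mgf] using this
  calc ∫ t, t ^ 4 ∂gaussianReal 0 1
      ≤ ∫ t, 24 * (Real.exp (1 * t) + Real.exp (-1 * t)) ∂gaussianReal 0 1 := by
        refine integral_mono ?_ (((hi 1).add (hi (-1))).const_mul 24) fun t => ?_
        · simpa [Even.pow_abs (by decide : Even 4)] using integrable_pow_gaussian 4
        · have := pow_le_exp_add_exp 4 t (by decide)
          simpa [Nat.factorial] using this
    _ = 24 * (Real.exp (1 / 2) + Real.exp (1 / 2)) := by
        rw [integral_const_mul, integral_add (hi 1) (hi (-1)), hm, hm]; norm_num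
    _ ≤ 96 := by linarith [exp_half_le]

lemma IsZeroMeanSubgaussian.memLp_two {ν : Measure ℝ} {σ : ℝ} (h : IsZeroMeanSubgaussian ν σ) :
    MemLp (fun t : ℝ => t) 2 ν := by
  rw [memLp_two_iff_integrable_sq (by fun_prop)]
  refine Integrable.mono' (((h.2.2 1).1.add (h.2.2 (-1)).1).const_mul 2) (by fun_prop) ?_
  filter_upwards with t
  have := pow_le_exp_add_exp 2 t (by decide)
  simpa [Nat.factorial] using this

/-- The exponential moments at `± 1 / σ` bound the second moment; for `σ = 0` all of them are at
most `1`, which forces the second moment to vanish. -/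
lemma IsZeroMeanSubgaussian.integral_sq_le {ν : Measure ℝ} {σ : ℝ} (hσ : 0 ≤ σ)
    (h : IsZeroMeanSubgaussian ν σ) : ∫ t, t ^ 2 ∂ν ≤ 8 * σ ^ 2 := by
  have key : ∀ l : ℝ, l ^ 2 * ∫ t, t ^ 2 ∂ν ≤ 4 * Real.exp (l ^ 2 * σ ^ 2 / 2) := by
    intro l
    have h1 : ∫ t, (l * t) ^ 2 ∂ν ≤ ∫ t, 2 * (Real.exp (l * t) + Real.exp (-l * t)) ∂ν := by
      refine integral_mono ?_ (((h.2.2 l).1.add (h.2.2 (-l)).1).const_mul 2) fun t => ?_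
      · have := h.memLp_two.integrable_sq.const_mul (l ^ 2)
        simpa [mul_pow] using this
      · have := pow_le_exp_add_exp 2 (l * t) (by decide)
        simpa [Nat.factorial] using this
    rw [integral_const_mul, integral_add (h.2.2 l).1 (h.2.2 (-l)).1] at h1
    have h2 := (h.2.2 l).2
    have h3 := (h.2.2 (-l)).2
    rw [neg_sq] at h3
    simp only [mul_pow, integral_const_mul] at h1
    linarith
  rcases hσ.eq_or_lt with rfl | hσ
  · have h0 : 0 ≤ ∫ t, t ^ 2 ∂ν := integral_nonneg fun t => sq_nonneg t
    by_contra! hcon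
    set I := ∫ t, t ^ 2 ∂ν
    have hI : 0 < I := by simpa using hcon
    have := key (Real.sqrt (8 / I))
    rw [Real.sq_sqrt (by positivity), div_mul_cancel₀ _ hI.ne'] at this
    norm_num at this
  · have := key σ⁻¹
    rw [← mul_pow, inv_mul_cancel₀ hσ.ne', inv_pow, inv_mul_le_iff₀ (by positivity), one_pow] at this
    nlinarith [exp_half_le, sq_nonneg σ]

/-! ### Normalised activations and their networks -/

/-- Normalised hypotheses on the activation: `a` is its Gaussian mean and `K ≥ 1` bounds both its
Lipschitz constant and its growth relative to `a`. -/
structure Act (φ : ℝ → ℝ) (a K : ℝ) : Prop where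
  pos : 0 < a
  one_le : 1 ≤ K
  lip : ∀ s t, |φ s - φ t| ≤ a * K * |s - t|
  nonneg : ∀ t, 0 ≤ φ t
  growth : ∀ t, φ t ≤ a * K * (1 + |t|)
  mean : ∫ t, φ t ∂gaussianReal 0 1 = a

lemma integral_abs_gaussian_le : ∫ t, |t| ∂gaussianReal 0 1 ≤ 1 := by
  calc ∫ t, |t| ∂gaussianReal 0 1 ≤ ∫ t, (1 + t ^ 2) / 2 ∂gaussianReal 0 1 := by
        refine integral_mono (by simpa using integrable_pow_gaussian 1) ?_ fun t => ?_
        · have := integrable_pow_gaussian 2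
          simp only [sq_abs] at this
          exact ((integrable_const 1).add this).div_const 2
        · have : 0 ≤ (|t| - 1) ^ 2 := sq_nonneg _
          have h2 : |t| ^ 2 = t ^ 2 := sq_abs t
          show |t| ≤ (1 + t ^ 2) / 2
          nlinarith
    _ = 1 := by
        have := integrable_pow_gaussian 2
        simp only [sq_abs] at this
        rw [integral_div, integral_add (integrable_const 1) this, integral_sq_gaussian]
        norm_num

lemma continuous_of_lip {φ : ℝ → ℝ} {L : ℝ} (h : ∀ s t : ℝ, |φ s - φ t| ≤ L * |s - t|) :
    Continuous φ :=
  (LipschitzWith.of_dist_le_mul (K := L.toNNReal) fun s t => by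
    rw [Real.dist_eq, Real.dist_eq]
    exact (h s t).trans (by gcongr; exact Real.le_coe_toNNReal L)).continuous

/-- `φ 0 ≤ E φ + L` by Lipschitz continuity, whence the growth bound. Since `t² - 1` has mean zero,
`C ≤ E [(φ t - φ 0) (t² - 1)] ≤ L E |t (t² - 1)|`, whence the lower bound on `L / C`. -/
lemma act_of_hyp {φ : ℝ → ℝ} {L C : ℝ} (hC : 0 < C)
    (hlip : ∀ s t : ℝ, |φ s - φ t| ≤ L * |s - t|) (h0 : ∀ t, 0 ≤ φ t)
    (h1 : C ≤ ∫ t, φ t ∂gaussianReal 0 1)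
    (h2 : C ≤ ∫ t, φ t * (t ^ 2 - 1) ∂gaussianReal 0 1) :
    Act φ (∫ t, φ t ∂gaussianReal 0 1) (1 + L / C) ∧ 49 / 48 ≤ 1 + L / C := by
  have hcont := continuous_of_lip hlip
  have hL : 0 ≤ L := by
    have := (abs_nonneg _).trans (hlip 1 0)
    simpa using this
  have hi1 : Integrable (fun t : ℝ => |t|) (gaussianReal 0 1) := by
    simpa using integrable_pow_gaussian 1
  have hi2 : Integrable (fun t : ℝ => t ^ 2) (gaussianReal 0 1) := by
    simpa using integrable_pow_gaussian 2
  have hi4 : Integrable (fun t : ℝ => t ^ 4) (gaussianReal 0 1) := by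
    simpa [Even.pow_abs (by decide : Even 4)] using integrable_pow_gaussian 4
  have hgr : ∀ t, φ t ≤ φ 0 + L * |t| := fun t => by
    have := (abs_le.1 (hlip t 0)).2
    rw [sub_zero] at this
    linarith
  have hφi : Integrable φ (gaussianReal 0 1) := by
    refine Integrable.mono' ((integrable_const (φ 0)).add (hi1.const_mul L))
      hcont.aestronglyMeasurable ?_
    filter_upwards with t
    rw [Real.norm_of_nonneg (h0 t)]
    exact hgr t
  set a := ∫ t, φ t ∂gaussianReal 0 1 with ha
  have hφ0 : φ 0 ≤ a + L := by
    have : ∫ _t : ℝ, φ 0 ∂gaussianReal 0 1 ≤ ∫ t, (φ t + L * |t|) ∂gaussianReal 0 1 := by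
      refine integral_mono (integrable_const _) (hφi.add (hi1.const_mul L)) fun t => ?_
      have := (abs_le.1 (hlip t 0)).1
      rw [sub_zero] at this
      show φ 0 ≤ φ t + L * |t|
      linarith
    rw [integral_add hφi (hi1.const_mul L), integral_const_mul] at this
    simp only [integral_const, probReal_univ, one_smul] at this
    have h3 := mul_le_mul_of_nonneg_left integral_abs_gaussian_le hL
    linarith
  have hLa : L ≤ a * (L / C) := by
    calc L = C * (L / C) := by field_simp
      _ ≤ a * (L / C) := by gcongr
  have hpos : 0 < a := hC.trans_le h1
  refine ⟨⟨hpos, by linarith [div_nonneg hL hC.le], fun s t => (hlip s t).trans ?_, h0,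
    fun t => ?_, rfl⟩, ?_⟩
  · gcongr
    linarith
  · have := mul_nonneg hpos.le (abs_nonneg t)
    nlinarith [hgr t, mul_le_mul_of_nonneg_right hLa (abs_nonneg t)]
  · have hi3 : Integrable (fun t : ℝ => L * ((t ^ 4 - t ^ 2 + 1) / 2)) (gaussianReal 0 1) :=
      (((hi4.sub hi2).add (integrable_const 1)).div_const 2).const_mul L
    have hi5 : Integrable (fun t : ℝ => φ 0 * (t ^ 2 - 1)) (gaussianReal 0 1) :=
      (hi2.sub (integrable_const 1)).const_mul _
    have hb : ∀ t : ℝ, |(φ t - φ 0) * (t ^ 2 - 1)| ≤ L * ((t ^ 4 - t ^ 2 + 1) / 2) := fun t => by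
      rw [abs_mul]
      have h := hlip t 0
      rw [sub_zero] at h
      have h5 : |t| * |t ^ 2 - 1| ≤ (t ^ 4 - t ^ 2 + 1) / 2 := by
        have e1 : |t| ^ 2 = t ^ 2 := sq_abs _
        have e2 : |t ^ 2 - 1| ^ 2 = (t ^ 2 - 1) ^ 2 := sq_abs _
        nlinarith [sq_nonneg (|t| - |t ^ 2 - 1|)]
      calc |φ t - φ 0| * |t ^ 2 - 1| ≤ L * |t| * |t ^ 2 - 1| := by gcongr
        _ = L * (|t| * |t ^ 2 - 1|) := by ring
        _ ≤ _ := by gcongr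
    have hi6 : Integrable (fun t : ℝ => (φ t - φ 0) * (t ^ 2 - 1)) (gaussianReal 0 1) := by
      refine Integrable.mono' hi3 (by fun_prop) ?_
      filter_upwards with t
      exact hb t
    have e1 : ∫ t, φ t * (t ^ 2 - 1) ∂gaussianReal 0 1
        = ∫ t, ((φ t - φ 0) * (t ^ 2 - 1) + φ 0 * (t ^ 2 - 1)) ∂gaussianReal 0 1 := by
      congr 1; ext t; ring
    have e2 : ∫ t : ℝ, φ 0 * (t ^ 2 - 1) ∂gaussianReal 0 1 = 0 := by
      rw [integral_const_mul, integral_sub hi2 (integrable_const 1), integral_sq_gaussian]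
      simp
    have e3 : ∫ t, (φ t - φ 0) * (t ^ 2 - 1) ∂gaussianReal 0 1
        ≤ ∫ t, L * ((t ^ 4 - t ^ 2 + 1) / 2) ∂gaussianReal 0 1 :=
      integral_mono hi6 hi3 fun t => (le_abs_self _).trans (hb t)
    have e4 : ∫ t : ℝ, L * ((t ^ 4 - t ^ 2 + 1) / 2) ∂gaussianReal 0 1
        = L * (((∫ t, t ^ 4 ∂gaussianReal 0 1) - 1 + 1) / 2) := by
      rw [integral_const_mul, integral_div, integral_add (f := fun t : ℝ => t ^ 4 - t ^ 2)
        (hi4.sub hi2) (integrable_const 1), integral_sub hi4 hi2, integral_sq_gaussian]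
      simp
    rw [integral_add hi6 hi5, e2] at e1
    have e5 : C ≤ 48 * L := by
      nlinarith [integral_pow_four_gaussian]
    have : 1 / 48 ≤ L / C := by rw [div_le_div_iff₀ (by norm_num) hC]; linarith
    linarith

namespace Act

variable {φ : ℝ → ℝ} {a K : ℝ} {d k : ℕ}

lemma cont (H : Act φ a K) : Continuous φ := continuous_of_lip H.lip

lemma sq_le (H : Act φ a K) (t : ℝ) : φ t ^ 2 ≤ (a * K) ^ 2 * (2 + 2 * t ^ 2) := by
  have h := pow_le_pow_left₀ (H.nonneg t) (H.growth t) 2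
  rw [mul_pow] at h
  refine h.trans ?_
  gcongr
  nlinarith [sq_nonneg (1 - |t|), sq_abs t]

lemma pow_four_le (H : Act φ a K) (t : ℝ) : φ t ^ 4 ≤ (a * K) ^ 4 * (8 + 8 * t ^ 4) := by
  have h := pow_le_pow_left₀ (sq_nonneg _) (H.sq_le t) 2
  rw [mul_pow, ← pow_mul, ← pow_mul] at h
  norm_num only at h
  refine h.trans ?_
  gcongr
  nlinarith [sq_nonneg (1 - t ^ 2)]

lemma integrable_pow_four (H : Act φ a K) : Integrable (fun t => φ t ^ 4) (gaussianReal 0 1) := by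
  have hi4 : Integrable (fun t : ℝ => t ^ 4) (gaussianReal 0 1) := by
    simpa [Even.pow_abs (by decide : Even 4)] using integrable_pow_gaussian 4
  have := H.cont
  refine Integrable.mono' (((integrable_const 8).add (hi4.const_mul 8)).const_mul ((a * K) ^ 4))
    (by fun_prop) ?_
  filter_upwards with t
  rw [Real.norm_of_nonneg (by positivity)]
  exact H.pow_four_le t

lemma integrable_sq (H : Act φ a K) : Integrable (fun t => φ t ^ 2) (gaussianReal 0 1) := by
  have hi2 : Integrable (fun t : ℝ => t ^ 2) (gaussianReal 0 1) := by
    simpa using integrable_pow_gaussian 2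
  have := H.cont
  refine Integrable.mono' (((integrable_const 2).add (hi2.const_mul 2)).const_mul ((a * K) ^ 2))
    (by fun_prop) ?_
  filter_upwards with t
  rw [Real.norm_of_nonneg (by positivity)]
  exact H.sq_le t

lemma integral_sq_le (H : Act φ a K) : ∫ t, φ t ^ 2 ∂gaussianReal 0 1 ≤ 4 * (a * K) ^ 2 := by
  have hi2 : Integrable (fun t : ℝ => t ^ 2) (gaussianReal 0 1) := by
    simpa using integrable_pow_gaussian 2
  have hle : ∫ t, φ t ^ 2 ∂gaussianReal 0 1
      ≤ ∫ t, (a * K) ^ 2 * (2 + 2 * t ^ 2) ∂gaussianReal 0 1 :=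
    integral_mono H.integrable_sq
      (((integrable_const 2).add (hi2.const_mul 2)).const_mul ((a * K) ^ 2)) H.sq_le
  refine hle.trans ?_
  rw [integral_const_mul]
  have : ∫ t : ℝ, (2 + 2 * t ^ 2) ∂gaussianReal 0 1 = 4 := by
    rw [integral_add (integrable_const 2) (hi2.const_mul 2), integral_const_mul,
      integral_sq_gaussian]
    norm_num
  rw [this, mul_comm]

lemma integral_pow_four_le (H : Act φ a K) :
    ∫ t, φ t ^ 4 ∂gaussianReal 0 1 ≤ 800 * (a * K) ^ 4 := by
  have hi4 : Integrable (fun t : ℝ => t ^ 4) (gaussianReal 0 1) := by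
    simpa [Even.pow_abs (by decide : Even 4)] using integrable_pow_gaussian 4
  have hle : ∫ t, φ t ^ 4 ∂gaussianReal 0 1
      ≤ ∫ t, (a * K) ^ 4 * (8 + 8 * t ^ 4) ∂gaussianReal 0 1 :=
    integral_mono H.integrable_pow_four
      (((integrable_const 8).add (hi4.const_mul 8)).const_mul ((a * K) ^ 4)) H.pow_four_le
  refine hle.trans ?_
  rw [integral_const_mul]
  have : ∫ t : ℝ, (8 + 8 * t ^ 4) ∂gaussianReal 0 1 ≤ 800 := by
    rw [integral_add (integrable_const 8) (hi4.const_mul 8), integral_const_mul]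
    have := integral_pow_four_gaussian
    simp only [integral_const, probReal_univ, one_smul]
    linarith
  rw [mul_comm]
  gcongr

lemma integral_neuron {v : Fin d → ℝ} (hv : ∑ j, v j ^ 2 = 1) {F : ℝ → ℝ} (hF : Continuous F) :
    ∫ x, F (∑ j, v j * x j) ∂(_root_.stdGaussian d) = ∫ t, F t ∂gaussianReal 0 1 := by
  rw [← (mp_dot hv).map_eq, integral_map (mp_dot hv).measurable.aemeasurable
    hF.aestronglyMeasurable]

lemma integrable_neuron {v : Fin d → ℝ} (hv : ∑ j, v j ^ 2 = 1) {F : ℝ → ℝ}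
    (hF : Integrable F (gaussianReal 0 1)) :
    Integrable (fun x => F (∑ j, v j * x j)) (_root_.stdGaussian d) :=
  (mp_dot hv).integrable_comp_of_integrable hF

lemma memLp_neuron (H : Act φ a K) {v : Fin d → ℝ} (hv : ∑ j, v j ^ 2 = 1) :
    MemLp (fun x => φ (∑ j, v j * x j)) 2 (_root_.stdGaussian d) := by
  have := H.cont
  rw [memLp_two_iff_integrable_sq (Continuous.aestronglyMeasurable (by fun_prop))]
  exact integrable_neuron hv H.integrable_sq

lemma memLp_net (H : Act φ a K) {α : Fin k → ℝ} {w : Fin k → Fin d → ℝ}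
    (hw : ∀ i, ∑ j, w i j ^ 2 = 1) : MemLp (phiNet φ α w) 2 (_root_.stdGaussian d) := by
  unfold phiNet
  exact memLp_finsetSum _ fun i _ => (H.memLp_neuron (hw i)).const_mul (α i)

lemma continuous_net (H : Act φ a K) (α : Fin k → ℝ) (w : Fin k → Fin d → ℝ) :
    Continuous (phiNet φ α w) := by
  have := H.cont
  unfold phiNet
  fun_prop

lemma integral_net_mul (H : Act φ a K) {α : Fin k → ℝ} {w : Fin k → Fin d → ℝ}
    (hw : ∀ i, ∑ j, w i j ^ 2 = 1) {g : (Fin d → ℝ) → ℝ}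
    (hg : MemLp g 2 (_root_.stdGaussian d)) :
    ∫ x, g x * phiNet φ α w x ∂(_root_.stdGaussian d)
      = ∑ i, α i * ∫ x, g x * φ (∑ j, w i j * x j) ∂(_root_.stdGaussian d) := by
  unfold phiNet
  simp only [Finset.mul_sum]
  rw [integral_finsetSum]
  · refine Finset.sum_congr rfl fun i _ => ?_
    rw [← integral_const_mul]
    congr 1; ext x; ring
  · intro i _
    exact hg.integrable_mul ((H.memLp_neuron (hw i)).const_mul (α i))

lemma integral_net (H : Act φ a K) {α : Fin k → ℝ} {w : Fin k → Fin d → ℝ}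
    (hw : ∀ i, ∑ j, w i j ^ 2 = 1) :
    ∫ x, phiNet φ α w x ∂(_root_.stdGaussian d) = a * ∑ i, α i := by
  have h := H.integral_net_mul (α := α) hw (g := fun _ => 1) (memLp_const 1)
  simp only [one_mul] at h
  rw [h, mul_comm, Finset.sum_mul]
  refine Finset.sum_congr rfl fun i _ => ?_
  rw [integral_neuron (hw i) H.cont, H.mean]

/-- Cauchy-Schwarz with weights `α`. -/
lemma weighted_sq_le {ι : Type*} (s : Finset ι) {α : ι → ℝ} (hα : ∀ i ∈ s, 0 ≤ α i) (z : ι → ℝ) :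
    (∑ i ∈ s, α i * z i) ^ 2 ≤ (∑ i ∈ s, α i) * ∑ i ∈ s, α i * z i ^ 2 :=
  Finset.sum_sq_le_sum_mul_sum_of_sq_le_mul s hα
    (fun i hi => mul_nonneg (hα i hi) (sq_nonneg _)) fun i _ => le_of_eq (by ring)

/-- Moving unit directions by at most `δ` moves a neuron by at most `a K δ` in `L²`. -/
lemma integral_neuron_sub_sq_le (H : Act φ a K) {v w : Fin d → ℝ} {δ : ℝ}
    (hvw : ∑ j, (w j - v j) ^ 2 ≤ δ ^ 2) :
    ∫ x, (φ (∑ j, w j * x j) - φ (∑ j, v j * x j)) ^ 2 ∂(_root_.stdGaussian d)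
      ≤ (a * K) ^ 2 * δ ^ 2 := by
  have hm := (memLp_dot (fun j => w j - v j)).integrable_sq
  calc _ ≤ ∫ x, (a * K) ^ 2 * (∑ j, (w j - v j) * x j) ^ 2 ∂(_root_.stdGaussian d) := by
        refine integral_mono_of_nonneg (Filter.Eventually.of_forall fun x => sq_nonneg _)
          (hm.const_mul _) (Filter.Eventually.of_forall fun x => ?_)
        have h := H.lip (∑ j, w j * x j) (∑ j, v j * x j)
        rw [← Finset.sum_sub_distrib] at h
        simp only [← sub_mul] at h
        have h2 := pow_le_pow_left₀ (abs_nonneg _) h 2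
        rwa [sq_abs, mul_pow, sq_abs] at h2
    _ = (a * K) ^ 2 * ∑ j, (w j - v j) ^ 2 := by rw [integral_const_mul, integral_dot_sq]
    _ ≤ _ := by gcongr

end Act

/-! ### Moments of the samples -/

namespace Act

variable {φ : ℝ → ℝ} {a K : ℝ} {d k : ℕ}

lemma integrable_prod_sq (H : Act φ a K) {u v : Fin d → ℝ} (hu : ∑ j, u j ^ 2 = 1)
    (hv : ∑ j, v j ^ 2 = 1) :
    MemLp (fun x => φ (∑ j, u j * x j) * φ (∑ j, v j * x j)) 2 (_root_.stdGaussian d) ∧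
    ∫ x, (φ (∑ j, u j * x j) * φ (∑ j, v j * x j)) ^ 2 ∂(_root_.stdGaussian d)
      ≤ 800 * (a * K) ^ 4 := by
  have hc := H.cont
  have iu := integrable_neuron hu H.integrable_pow_four
  have iv := integrable_neuron hv H.integrable_pow_four
  have hdom := (iu.add iv).div_const 2
  have hle : ∀ x : Fin d → ℝ, (φ (∑ j, u j * x j) * φ (∑ j, v j * x j)) ^ 2
      ≤ (φ (∑ j, u j * x j) ^ 4 + φ (∑ j, v j * x j) ^ 4) / 2 := fun x => by
    nlinarith [sq_nonneg (φ (∑ j, u j * x j) ^ 2 - φ (∑ j, v j * x j) ^ 2)]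
  have h_mean : Integrable (fun x => (φ (∑ j, u j * x j) * φ (∑ j, v j * x j)) ^ 2)
      (_root_.stdGaussian d) := by
    refine Integrable.mono' hdom (Continuous.aestronglyMeasurable (by fun_prop)) ?_
    filter_upwards with x
    rw [Real.norm_of_nonneg (sq_nonneg _)]
    exact hle x
  refine ⟨?_, ?_⟩
  · rw [memLp_two_iff_integrable_sq (Continuous.aestronglyMeasurable (by fun_prop))]
    exact h_mean
  · refine (integral_mono h_mean hdom hle).trans ?_
    have : ∫ x, (φ (∑ j, u j * x j) ^ 4 + φ (∑ j, v j * x j) ^ 4) / 2 ∂(_root_.stdGaussian d)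
        ≤ 800 * (a * K) ^ 4 := by
      rw [integral_div, integral_add iu iv, integral_neuron hu (F := fun t => φ t ^ 4) (by fun_prop),
        integral_neuron hv (F := fun t => φ t ^ 4) (by fun_prop)]
      linarith [H.integral_pow_four_le]
    exact this

/-- Second moment of a nonnegative combination, by Cauchy-Schwarz with weights `α`. -/
lemma memLp_weighted {Ω : Type*} [MeasurableSpace Ω] {μ : Measure Ω} {α : Fin k → ℝ}
    (hα : ∀ i, 0 ≤ α i) {z : Fin k → Ω → ℝ} (hz : ∀ i, MemLp (z i) 2 μ) {M : ℝ}
    (hM : ∀ i, ∫ x, z i x ^ 2 ∂μ ≤ M) :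
    MemLp (fun x => ∑ i, α i * z i x) 2 μ ∧
      ∫ x, (∑ i, α i * z i x) ^ 2 ∂μ ≤ (∑ i, α i) ^ 2 * M := by
  have hsum : MemLp (fun x => ∑ i, α i * z i x) 2 μ :=
    memLp_finsetSum _ fun i _ => (hz i).const_mul (α i)
  refine ⟨hsum, ?_⟩
  have hi : ∀ i ∈ (univ : Finset (Fin k)), Integrable (fun x => α i * z i x ^ 2) μ :=
    fun i _ => (hz i).integrable_sq.const_mul _
  have h0 : 0 ≤ ∑ i, α i := Finset.sum_nonneg fun i _ => hα i
  calc ∫ x, (∑ i, α i * z i x) ^ 2 ∂μ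
      ≤ ∫ x, (∑ i, α i) * ∑ i, α i * z i x ^ 2 ∂μ :=
        integral_mono hsum.integrable_sq ((integrable_finsetSum _ hi).const_mul _)
          fun x => weighted_sq_le univ (fun i _ => hα i) (fun i => z i x)
    _ = (∑ i, α i) * ∑ i, α i * ∫ x, z i x ^ 2 ∂μ := by
        rw [integral_const_mul, integral_finsetSum _ hi]
        simp only [integral_const_mul]
    _ ≤ (∑ i, α i) * ∑ i, α i * M :=
        mul_le_mul_of_nonneg_left
          (Finset.sum_le_sum fun i _ => mul_le_mul_of_nonneg_left (hM i) (hα i)) h0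
    _ = (∑ i, α i) ^ 2 * M := by rw [← Finset.sum_mul]; ring

lemma net_mul_neuron (H : Act φ a K) {α : Fin k → ℝ} {w : Fin k → Fin d → ℝ} (hα : ∀ i, 0 < α i)
    (hw : ∀ i, ∑ j, w i j ^ 2 = 1) {v : Fin d → ℝ} (hv : ∑ j, v j ^ 2 = 1) :
    MemLp (fun x => phiNet φ α w x * φ (∑ j, v j * x j)) 2 (_root_.stdGaussian d) ∧
    ∫ x, (phiNet φ α w x * φ (∑ j, v j * x j)) ^ 2 ∂(_root_.stdGaussian d)
      ≤ (∑ i, α i) ^ 2 * (800 * (a * K) ^ 4) := by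
  have hexp : ∀ x, phiNet φ α w x * φ (∑ j, v j * x j)
      = ∑ i, α i * (φ (∑ j, w i j * x j) * φ (∑ j, v j * x j)) := fun x => by
    unfold phiNet
    rw [Finset.sum_mul]
    exact Finset.sum_congr rfl fun i _ => by ring
  simp only [hexp]
  exact memLp_weighted (fun i => (hα i).le) (fun i => (H.integrable_prod_sq (hw i) hv).1)
    fun i => (H.integrable_prod_sq (hw i) hv).2

lemma sq_integral_le {Ω : Type*} [MeasurableSpace Ω] {μ : Measure Ω} [IsProbabilityMeasure μ]
    {g : Ω → ℝ} (hg : MemLp g 2 μ) : (∫ x, g x ∂μ) ^ 2 ≤ ∫ x, g x ^ 2 ∂μ := by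
  have h := variance_nonneg g μ
  rw [variance_eq_sub hg] at h
  have e : ∫ x, (g ^ 2) x ∂μ = ∫ x, g x ^ 2 ∂μ := rfl
  rw [e] at h
  linarith

/-- The coefficient mass is controlled by the `L²` norm, because `a ∑ α i` is the mean of the
network. -/
lemma sum_sq_le (H : Act φ a K) {α : Fin k → ℝ} {w : Fin k → Fin d → ℝ}
    (hw : ∀ i, ∑ j, w i j ^ 2 = 1) :
    (a * ∑ i, α i) ^ 2 ≤ ∫ x, phiNet φ α w x ^ 2 ∂(_root_.stdGaussian d) := by
  rw [← H.integral_net hw]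
  exact sq_integral_le (H.memLp_net hw)

/-- Moments of `y φ⟨v, x⟩` for one labelled sample: the noise does not bias its mean, and the second
moment splits into a signal part and a noise part, each bounded by moments of `φ`. -/
lemma sample_moments (H : Act φ a K) {α : Fin k → ℝ} {w : Fin k → Fin d → ℝ} (hα : ∀ i, 0 < α i)
    (hw : ∀ i, ∑ j, w i j ^ 2 = 1) {v : Fin d → ℝ} (hv : ∑ j, v j ^ 2 = 1)
    {ν : Measure ℝ} {σ : ℝ} (hσ : 0 ≤ σ) (hν : IsZeroMeanSubgaussian ν σ)
    (P : Measure ((Fin d → ℝ) × ℝ))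
    (hP : P = Measure.map (fun p : (Fin d → ℝ) × ℝ => (p.1, phiNet φ α w p.1 + p.2))
      ((_root_.stdGaussian d).prod ν)) :
    MemLp (fun p : (Fin d → ℝ) × ℝ => p.2 * φ (∑ j, v j * p.1 j)) 2 P ∧
    ∫ p, p.2 * φ (∑ j, v j * p.1 j) ∂P
      = ∫ x, phiNet φ α w x * φ (∑ j, v j * x j) ∂(_root_.stdGaussian d) ∧
    ∫ p, (p.2 * φ (∑ j, v j * p.1 j)) ^ 2 ∂P
      ≤ 1600 * K ^ 4 * a ^ 2 * (σ ^ 2 + ∫ x, phiNet φ α w x ^ 2 ∂(_root_.stdGaussian d)) := by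
  have hc := H.cont
  have hcn := H.continuous_net α w
  have : IsProbabilityMeasure ν := hν.1
  obtain ⟨hm1, hb1⟩ := H.net_mul_neuron hα hw hv
  have hmT : Measurable (fun p : (Fin d → ℝ) × ℝ => (p.1, phiNet φ α w p.1 + p.2)) :=
    Continuous.measurable (by fun_prop)
  have hZc : Continuous (fun p : (Fin d → ℝ) × ℝ => p.2 * φ (∑ j, v j * p.1 j)) := by fun_prop
  have hA : MemLp (fun p : (Fin d → ℝ) × ℝ => phiNet φ α w p.1 * φ (∑ j, v j * p.1 j)) 2
      ((_root_.stdGaussian d).prod ν) := hm1.comp_fst ν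
  have hB : MemLp (fun p : (Fin d → ℝ) × ℝ => φ (∑ j, v j * p.1 j) * p.2) 2
      ((_root_.stdGaussian d).prod ν) := by
    rw [memLp_two_iff_integrable_sq (Continuous.aestronglyMeasurable (by fun_prop))]
    have := (H.memLp_neuron hv).integrable_sq.mul_prod hν.memLp_two.integrable_sq
    simpa only [mul_pow] using this
  have hsplit : ∀ p : (Fin d → ℝ) × ℝ, (phiNet φ α w p.1 + p.2) * φ (∑ j, v j * p.1 j)
      = phiNet φ α w p.1 * φ (∑ j, v j * p.1 j) + φ (∑ j, v j * p.1 j) * p.2 := fun p => by ring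
  refine ⟨?_, ?_, ?_⟩
  · rw [hP, memLp_map_measure_iff hZc.aestronglyMeasurable hmT.aemeasurable]
    have h := hA.add hB
    convert h using 1
    ext p
    exact hsplit p
  · rw [hP, integral_map hmT.aemeasurable hZc.aestronglyMeasurable]
    simp only [hsplit]
    rw [integral_add (hA.integrable (by norm_num)) (hB.integrable (by norm_num)),
      integral_prod_mul (fun x : Fin d → ℝ => φ (∑ j, v j * x j)) (fun t : ℝ => t), hν.2.1, mul_zero, add_zero]
    exact integral_fun_fst (μ := _root_.stdGaussian d) (ν := ν)
      (f := fun x => phiNet φ α w x * φ (∑ j, v j * x j)) |>.trans (by simp)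
  · have hZ2 : Continuous (fun p : (Fin d → ℝ) × ℝ => (p.2 * φ (∑ j, v j * p.1 j)) ^ 2) := by
      fun_prop
    rw [hP, integral_map hmT.aemeasurable hZ2.aestronglyMeasurable]
    simp only [hsplit]
    have hle : ∫ p : (Fin d → ℝ) × ℝ, (phiNet φ α w p.1 * φ (∑ j, v j * p.1 j)
          + φ (∑ j, v j * p.1 j) * p.2) ^ 2 ∂((_root_.stdGaussian d).prod ν)
        ≤ ∫ p : (Fin d → ℝ) × ℝ, (2 * (phiNet φ α w p.1 * φ (∑ j, v j * p.1 j)) ^ 2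
          + 2 * (φ (∑ j, v j * p.1 j) * p.2) ^ 2) ∂((_root_.stdGaussian d).prod ν) := by
      refine integral_mono (hA.add hB).integrable_sq
        ((hA.integrable_sq.const_mul 2).add (hB.integrable_sq.const_mul 2)) fun p => ?_
      have := sq_nonneg (phiNet φ α w p.1 * φ (∑ j, v j * p.1 j) - φ (∑ j, v j * p.1 j) * p.2)
      simp only
      nlinarith
    rw [integral_add (hA.integrable_sq.const_mul 2) (hB.integrable_sq.const_mul 2),
      integral_const_mul, integral_const_mul] at hle
    have e1 : ∫ p : (Fin d → ℝ) × ℝ, (phiNet φ α w p.1 * φ (∑ j, v j * p.1 j)) ^ 2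
        ∂((_root_.stdGaussian d).prod ν)
        = ∫ x, (phiNet φ α w x * φ (∑ j, v j * x j)) ^ 2 ∂(_root_.stdGaussian d) :=
      (integral_fun_fst (μ := _root_.stdGaussian d) (ν := ν)
        (f := fun x => (phiNet φ α w x * φ (∑ j, v j * x j)) ^ 2)).trans (by simp)
    have e2 : ∫ p : (Fin d → ℝ) × ℝ, (φ (∑ j, v j * p.1 j) * p.2) ^ 2
        ∂((_root_.stdGaussian d).prod ν)
        = (∫ t, φ t ^ 2 ∂gaussianReal 0 1) * ∫ t, t ^ 2 ∂ν := by
      simp only [mul_pow]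
      rw [integral_prod_mul (fun x : Fin d → ℝ => φ (∑ j, v j * x j) ^ 2) (fun t : ℝ => t ^ 2),
        integral_neuron hv (F := fun t => φ t ^ 2) (by fun_prop)]
    rw [e1, e2] at hle
    have e3 : (∫ t, φ t ^ 2 ∂gaussianReal 0 1) * ∫ t, t ^ 2 ∂ν ≤ (4 * (a * K) ^ 2) * (8 * σ ^ 2) :=
      mul_le_mul H.integral_sq_le (hν.integral_sq_le hσ)
        (integral_nonneg fun t => sq_nonneg t) (by positivity)
    have e4 := H.sum_sq_le (α := α) hw
    set F2 := ∫ x, phiNet φ α w x ^ 2 ∂(_root_.stdGaussian d)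
    have hK := H.one_le
    have hK2 : K ^ 2 ≤ K ^ 4 := pow_le_pow_right₀ hK (by norm_num)
    have e5 : (∑ i, α i) ^ 2 * (800 * (a * K) ^ 4) ≤ 800 * K ^ 4 * a ^ 2 * F2 := by
      calc _ = 800 * K ^ 4 * a ^ 2 * (a * ∑ i, α i) ^ 2 := by ring
        _ ≤ _ := by gcongr
    have e6 : (4 * (a * K) ^ 2) * (8 * σ ^ 2) ≤ 800 * K ^ 4 * a ^ 2 * σ ^ 2 := by
      calc _ = 32 * K ^ 2 * a ^ 2 * σ ^ 2 := by ring
        _ ≤ 800 * K ^ 4 * a ^ 2 * σ ^ 2 := by gcongr; norm_num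
    linarith

end Act

/-! ### Penalised least squares over a countable class -/

section Select

/-- If some value is below `c`, then values close to the infimum beat every competitor after the
competitor is mixed with a proportion `η` of `c`. -/
lemma exists_near_min {J : ℕ → ℝ} {B c η : ℝ} (hB : ∀ n, B ≤ J n) (hη : 0 < η) (hη1 : η ≤ 1)
    (h : ∃ j, J j < c) : ∃ n, ∀ j, J n ≤ (1 - η) * J j + η * c := by
  have hbdd : BddBelow (Set.range J) := ⟨B, by rintro _ ⟨n, rfl⟩; exact hB n⟩
  obtain ⟨j0, hj0⟩ := h
  have hI : iInf J < c := (ciInf_le hbdd j0).trans_lt hj0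
  obtain ⟨n, hn⟩ := exists_lt_of_ciInf_lt (show iInf J < (1 - η) * iInf J + η * c by nlinarith)
  refine ⟨n, fun j => hn.le.trans ?_⟩
  have := mul_le_mul_of_nonneg_left (ciInf_le hbdd j) (sub_nonneg.2 hη1)
  linarith

/-- The first index satisfying the inequality of `exists_near_min` is a measurable function. -/
lemma exists_measurable_selection {Ω : Type*} [MeasurableSpace Ω] (J : ℕ → Ω → ℝ)
    (hJ : ∀ n, Measurable (J n)) (η c : ℝ) :
    ∃ n : Ω → ℕ, Measurable n ∧ ∀ s, (∃ i, ∀ j, J i s ≤ (1 - η) * J j s + η * c) →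
      ∀ j, J (n s) s ≤ (1 - η) * J j s + η * c := by
  classical
  let G : Ω → ℕ → Prop := fun s i => ∀ j, J i s ≤ (1 - η) * J j s + η * c
  have hG : ∀ i, MeasurableSet {s | G s i} := fun i => by
    have : {s | G s i} = ⋂ j, {s | J i s ≤ (1 - η) * J j s + η * c} := by
      ext s; simp [G]
    rw [this]
    exact MeasurableSet.iInter fun j =>
      measurableSet_le (hJ i) (((hJ j).const_mul _).add_const _)
  let p : Ω → ℕ → Prop := fun s i => G s i ∨ ¬ ∃ l, G s l
  have hp : ∀ s, ∃ i, p s i := fun s => by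
    by_cases h : ∃ l, G s l
    · exact ⟨h.choose, Or.inl h.choose_spec⟩
    · exact ⟨0, Or.inr h⟩
  have hex : MeasurableSet {s | ∃ l, G s l} := by
    have : {s | ∃ l, G s l} = ⋃ l, {s | G s l} := by ext s; simp
    rw [this]
    exact MeasurableSet.iUnion hG
  refine ⟨fun s => Nat.find (hp s), measurable_find hp fun i => (hG i).union hex.compl, ?_⟩
  intro s hs
  rcases Nat.find_spec (hp s) with h | h
  · exact h
  · exact absurd hs h

end Select

/-- Indices of the candidate networks: positive rational coefficients, directions in `N`. -/
abbrev Cand {d : ℕ} (N : Finset (Fin d → ℝ)) (k : ℕ) : Type :=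
  (Fin k → {q : ℚ // 0 < q}) × (Fin k → N)

namespace Cand

variable {d k : ℕ} {N : Finset (Fin d → ℝ)}

/-- The coefficients of a candidate network. -/
def coef (p : Cand N k) : Fin k → ℝ := fun i => ((p.1 i : ℚ) : ℝ)

/-- The weight vectors of a candidate network. -/
def dir (p : Cand N k) : Fin k → Fin d → ℝ := fun i => (p.2 i : Fin d → ℝ)

/-- The squared loss of a candidate `h`, up to the constant `E f²`, when `T v` stands in for the
correlation `E [f φ⟨v, ·⟩]`. -/
noncomputable def crit (φ : ℝ → ℝ) (T : (Fin d → ℝ) → ℝ) (p : Cand N k) : ℝ :=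
  (∫ x, phiNet φ p.coef p.dir x ^ 2 ∂(_root_.stdGaussian d)) - 2 * ∑ i, p.coef i * T (p.dir i)

lemma coef_pos (p : Cand N k) (i : Fin k) : 0 < p.coef i := by
  unfold coef; exact_mod_cast (p.1 i).2

lemma dir_unit (p : Cand N k) (hN : ∀ v ∈ N, ∑ j, v j ^ 2 = 1) (i : Fin k) :
    ∑ j, p.dir i j ^ 2 = 1 := hN _ (p.2 i).2

end Cand

namespace Act

variable {φ : ℝ → ℝ} {a K : ℝ} {d k : ℕ} {N : Finset (Fin d → ℝ)}

lemma integral_add_sq_le {Ω : Type*} [MeasurableSpace Ω] {μ : Measure Ω} {f g : Ω → ℝ}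
    (hf : MemLp f 2 μ) (hg : MemLp g 2 μ) :
    ∫ x, (f x + g x) ^ 2 ∂μ ≤ 2 * (∫ x, f x ^ 2 ∂μ) + 2 * ∫ x, g x ^ 2 ∂μ := by
  rw [← integral_const_mul, ← integral_const_mul,
    ← integral_add (hf.integrable_sq.const_mul 2) (hg.integrable_sq.const_mul 2)]
  refine integral_mono (hf.add hg).integrable_sq
    ((hf.integrable_sq.const_mul 2).add (hg.integrable_sq.const_mul 2)) fun x => ?_
  have h := add_sq_le (a := f x) (b := g x)
  simp only
  linarith

lemma risk_expand (H : Act φ a K) {α β : Fin k → ℝ} {w v : Fin k → Fin d → ℝ}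
    (hw : ∀ i, ∑ j, w i j ^ 2 = 1) (hv : ∀ i, ∑ j, v i j ^ 2 = 1) :
    ∫ x, (phiNet φ α w x - phiNet φ β v x) ^ 2 ∂(_root_.stdGaussian d)
      = (∫ x, phiNet φ α w x ^ 2 ∂(_root_.stdGaussian d))
        + (∫ x, phiNet φ β v x ^ 2 ∂(_root_.stdGaussian d))
        - 2 * ∑ i, β i * ∫ x, phiNet φ α w x * φ (∑ j, v i j * x j) ∂(_root_.stdGaussian d) := by
  have hf := H.memLp_net (α := α) hw
  have hg := H.memLp_net (α := β) hv
  have hfg : Integrable (fun x => phiNet φ α w x * phiNet φ β v x) (_root_.stdGaussian d) :=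
    hf.integrable_mul hg
  rw [← H.integral_net_mul hv hf, ← integral_add hf.integrable_sq hg.integrable_sq,
    ← integral_const_mul]
  have h := integral_sub (hf.integrable_sq.add hg.integrable_sq) (hfg.const_mul 2)
  simp only [Pi.add_apply] at h
  rw [← h]
  refine integral_congr_ae (Filter.Eventually.of_forall fun x => ?_)
  simp only
  ring

/-- The criterion estimates the excess risk with error at most twice the coefficient mass of the
candidate times the error of `T`. -/
lemma abs_crit_sub_le (H : Act φ a K) {α : Fin k → ℝ} {w : Fin k → Fin d → ℝ}
    (hw : ∀ i, ∑ j, w i j ^ 2 = 1) (hN : ∀ v ∈ N, ∑ j, v j ^ 2 = 1) {T : (Fin d → ℝ) → ℝ} {τ : ℝ}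
    (hT : ∀ v ∈ N, |T v - ∫ x, phiNet φ α w x * φ (∑ j, v j * x j) ∂(_root_.stdGaussian d)| ≤ τ)
    (p : Cand N k) :
    |p.crit φ T - ((∫ x, (phiNet φ α w x - phiNet φ p.coef p.dir x) ^ 2 ∂(_root_.stdGaussian d))
      - ∫ x, phiNet φ α w x ^ 2 ∂(_root_.stdGaussian d))| ≤ 2 * ((∑ i, p.coef i) * τ) := by
  rw [H.risk_expand hw (p.dir_unit hN)]
  have e : ∀ A B F : ℝ, A - 2 * B - (F + A - 2 * (∑ i, p.coef i * ∫ x, phiNet φ α w x *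
      φ (∑ j, p.dir i j * x j) ∂(_root_.stdGaussian d)) - F)
      = -(2 * (B - ∑ i, p.coef i * ∫ x, phiNet φ α w x *
      φ (∑ j, p.dir i j * x j) ∂(_root_.stdGaussian d))) := fun A B F => by ring
  unfold Cand.crit
  rw [e, abs_neg, abs_mul, abs_two, ← Finset.sum_sub_distrib, Finset.sum_mul]
  gcongr
  refine (Finset.abs_sum_le_sum_abs _ _).trans (Finset.sum_le_sum fun i _ => ?_)
  rw [← mul_sub, abs_mul, abs_of_pos (p.coef_pos i)]
  exact mul_le_mul_of_nonneg_left (hT _ (p.2 i).2) (p.coef_pos i).le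

/-- Replacing the directions `w` by `v` and the coefficients `α` by smaller ones `β`. -/
lemma integral_net_sub_sq_le (H : Act φ a K) {δ : ℝ} {α β : Fin k → ℝ} {w v : Fin k → Fin d → ℝ}
    (hα : ∀ i, 0 ≤ α i) (hβ : ∀ i, β i ≤ α i)
    (hw : ∀ i, ∑ j, w i j ^ 2 = 1) (hv : ∀ i, ∑ j, v i j ^ 2 = 1)
    (hwv : ∀ i, ∑ j, (w i j - v i j) ^ 2 ≤ δ ^ 2) :
    ∫ x, (phiNet φ α w x - phiNet φ β v x) ^ 2 ∂(_root_.stdGaussian d)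
      ≤ 2 * ((∑ i, α i) ^ 2 * ((a * K) ^ 2 * δ ^ 2))
        + 2 * ((∑ i, (α i - β i)) ^ 2 * (4 * (a * K) ^ 2)) := by
  have hM : ∀ i, ∫ x, φ (∑ j, v i j * x j) ^ 2 ∂(_root_.stdGaussian d) ≤ 4 * (a * K) ^ 2 :=
    fun i => by
      have hc := H.cont
      rw [integral_neuron (hv i) (F := fun t => φ t ^ 2) (by fun_prop)]
      exact H.integral_sq_le
  have h1 := memLp_weighted (μ := _root_.stdGaussian d) hα
    (z := fun i x => φ (∑ j, w i j * x j) - φ (∑ j, v i j * x j))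
    (M := (a * K) ^ 2 * δ ^ 2)
    (fun i => (H.memLp_neuron (hw i)).sub (H.memLp_neuron (hv i)))
    (fun i => H.integral_neuron_sub_sq_le (hwv i))
  have h2 := memLp_weighted (μ := _root_.stdGaussian d) (α := fun i => α i - β i)
    (fun i => sub_nonneg.2 (hβ i))
    (z := fun i x => φ (∑ j, v i j * x j)) (fun i => H.memLp_neuron (hv i)) hM
  have hdec : ∀ x, phiNet φ α w x - phiNet φ β v x
      = (∑ i, α i * (φ (∑ j, w i j * x j) - φ (∑ j, v i j * x j)))
        + ∑ i, (α i - β i) * φ (∑ j, v i j * x j) := fun x => by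
    unfold phiNet
    rw [← Finset.sum_add_distrib, ← Finset.sum_sub_distrib]
    refine Finset.sum_congr rfl fun i _ => ?_
    ring
  simp only [hdec]
  have hle := integral_add_sq_le h1.1 h2.1
  linarith [h1.2, h2.2]

/-- Every network is within `ε / 4`, relative to `a ∑ α`, of a candidate with no more mass. -/
lemma exists_cand (H : Act φ a K) {ε : ℝ} (hε : 0 < ε) (hε1 : ε < 1) {α : Fin k → ℝ}
    {w : Fin k → Fin d → ℝ} (hα : ∀ i, 0 < α i) (hN : ∀ v ∈ N, ∑ j, v j ^ 2 = 1)
    (hw : ∀ i, ∑ j, w i j ^ 2 = 1)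
    (hcov : ∀ w : Fin d → ℝ, ∑ j, w j ^ 2 = 1 →
      ∃ v ∈ N, ∑ j, (w j - v j) ^ 2 ≤ (ε / (8 * K)) ^ 2) :
    ∃ p : Cand N k, ∑ i, p.coef i ≤ ∑ i, α i ∧
      ∫ x, (phiNet φ α w x - phiNet φ p.coef p.dir x) ^ 2 ∂(_root_.stdGaussian d)
        ≤ ε ^ 2 / 16 * (a * ∑ i, α i) ^ 2 := by
  have hK := H.one_le
  have hK0 : 0 < K := by linarith
  set κ := ε / (16 * K) with hκ
  have hκ0 : 0 < κ := by positivity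
  have hq : ∀ i, ∃ q : ℚ, (1 - κ) * α i < q ∧ (q : ℝ) < α i := fun i =>
    exists_rat_btwn (by nlinarith [mul_pos hκ0 (hα i)])
  have hκ1 : κ < 1 := by rw [hκ, div_lt_one (by positivity)]; linarith
  choose q hq1 hq2 using hq
  have hq0 : ∀ i, 0 < q i := fun i => by
    have : (0 : ℝ) < q i := lt_trans (mul_pos (by linarith) (hα i)) (hq1 i)
    exact_mod_cast this
  choose v hvN hv using fun i => hcov (w i) (hw i)
  let p : Cand N k := (fun i => ⟨q i, hq0 i⟩, fun i => ⟨v i, hvN i⟩)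
  refine ⟨p, Finset.sum_le_sum fun i _ => (hq2 i).le, ?_⟩
  have hvu : ∀ i, ∑ j, v i j ^ 2 = 1 := fun i => hN _ (hvN i)
  have hle := H.integral_net_sub_sq_le (fun i => (hα i).le) (fun i => (hq2 i).le) hw hvu hv
  have hS : ∑ i, (α i - q i) ≤ κ * ∑ i, α i := by
    rw [Finset.mul_sum]
    exact Finset.sum_le_sum fun i _ => by linarith [hq1 i]
  have hS0 : 0 ≤ ∑ i, (α i - (q i : ℝ)) := Finset.sum_nonneg fun i _ => sub_nonneg.2 (hq2 i).le
  have b3 : (∑ i, (α i - (q i : ℝ))) ^ 2 * (4 * (a * K) ^ 2)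
      ≤ (κ * ∑ i, α i) ^ 2 * (4 * (a * K) ^ 2) := by gcongr
  calc _ ≤ _ := hle
    _ ≤ 2 * ((∑ i, α i) ^ 2 * ((a * K) ^ 2 * (ε / (8 * K)) ^ 2))
        + 2 * ((κ * ∑ i, α i) ^ 2 * (4 * (a * K) ^ 2)) := by gcongr
    _ = _ := by rw [hκ]; field_simp; ring

/-- On the event that `T` estimates all correlations to accuracy `ε² a ρ / 32`, some candidate
nearly minimises the criterion, and every such candidate has the required risk. -/
lemma risk_le (H : Act φ a K) {ε σ : ℝ} (hε : 0 < ε) (hε1 : ε < 1) (hk : 1 ≤ k) {α : Fin k → ℝ}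
    {w : Fin k → Fin d → ℝ} (hα : ∀ i, 0 < α i) (hN : ∀ v ∈ N, ∑ j, v j ^ 2 = 1)
    (hw : ∀ i, ∑ j, w i j ^ 2 = 1)
    (hcov : ∀ w : Fin d → ℝ, ∑ j, w j ^ 2 = 1 →
      ∃ v ∈ N, ∑ j, (w j - v j) ^ 2 ≤ (ε / (8 * K)) ^ 2)
    {ρ : ℝ} (hρ : 0 ≤ ρ)
    (hρ2 : ρ ^ 2 = σ ^ 2 + ∫ x, phiNet φ α w x ^ 2 ∂(_root_.stdGaussian d))
    {T : (Fin d → ℝ) → ℝ}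
    (hT : ∀ v ∈ N, |T v - ∫ x, phiNet φ α w x * φ (∑ j, v j * x j) ∂(_root_.stdGaussian d)|
      ≤ ε ^ 2 / 32 * a * ρ)
    {en : ℕ → Cand N k} (hen : Function.Surjective en) {n : ℕ}
    (hn : (∃ i, ∀ j, (en i).crit φ T
        ≤ (1 - ε ^ 2 / 8) * (en j).crit φ T + ε ^ 2 / 8 * σ ^ 2) →
      ∀ j, (en n).crit φ T ≤ (1 - ε ^ 2 / 8) * (en j).crit φ T + ε ^ 2 / 8 * σ ^ 2) :
    ∫ x, (phiNet φ α w x - phiNet φ (en n).coef (en n).dir x) ^ 2 ∂(_root_.stdGaussian d)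
      ≤ ε ^ 2 * ρ ^ 2 := by
  have ha := H.pos
  have hε2 : 0 < ε ^ 2 := by positivity
  have hε3 : ε ^ 2 < 1 := by nlinarith
  set F2 := ∫ x, phiNet φ α w x ^ 2 ∂(_root_.stdGaussian d) with hF2
  have hSF : (a * ∑ i, α i) ^ 2 ≤ F2 := H.sum_sq_le hw
  have hS : 0 < ∑ i, α i :=
    Finset.sum_pos (fun i _ => hα i) ⟨⟨0, hk⟩, Finset.mem_univ _⟩
  have hSρ : a * ∑ i, α i ≤ ρ := by
    refine abs_le_of_sq_le_sq' ?_ hρ |>.2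
    nlinarith [sq_nonneg σ]
  have hρ0 : 0 < ρ := lt_of_lt_of_le (by positivity) hSρ
  have hF0 : 0 < F2 := lt_of_lt_of_le (by positivity) hSF
  -- mass of an arbitrary candidate, from its risk
  have hmass : ∀ p : Cand N k, a * ∑ i, p.coef i ≤ ρ + √(∫ x, (phiNet φ α w x
      - phiNet φ p.coef p.dir x) ^ 2 ∂(_root_.stdGaussian d)) := fun p => by
    have hf := H.memLp_net (α := α) hw
    have hg := H.memLp_net (α := p.coef) (w := p.dir) (p.dir_unit hN)
    have h1 := sq_integral_le (hf.sub hg)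
    have h2 : ∫ x, (phiNet φ α w - phiNet φ p.coef p.dir) x ∂(_root_.stdGaussian d)
        = a * ∑ i, α i - a * ∑ i, p.coef i := by
      rw [← H.integral_net hw, ← H.integral_net (α := p.coef) (w := p.dir)
        (p.dir_unit hN)]
      exact integral_sub (hf.integrable (by norm_num)) (hg.integrable (by norm_num))
    rw [h2] at h1
    have h3 := (abs_le.1 (Real.abs_le_sqrt h1)).1
    change -√(∫ x, (phiNet φ α w x
      - phiNet φ p.coef p.dir x) ^ 2 ∂(_root_.stdGaussian d)) ≤ _ at h3
    linarith
  have hD0 : ∀ p : Cand N k, 0 ≤ ∫ x, (phiNet φ α w x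
      - phiNet φ p.coef p.dir x) ^ 2 ∂(_root_.stdGaussian d) := fun p =>
    integral_nonneg fun x => sq_nonneg _
  have hclose := fun p : Cand N k => abs_le.1 (H.abs_crit_sub_le hw hN hT p)
  -- the error of the criterion is bounded in terms of the risk
  have herr : ∀ p : Cand N k, 2 * ((∑ i, p.coef i) * (ε ^ 2 / 32 * a * ρ))
      ≤ ε ^ 2 / 16 * ρ * (ρ + √(∫ x, (phiNet φ α w x
      - phiNet φ p.coef p.dir x) ^ 2 ∂(_root_.stdGaussian d))) := fun p => by
    calc _ = ε ^ 2 / 16 * ρ * (a * ∑ i, p.coef i) := by ring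
      _ ≤ _ := mul_le_mul_of_nonneg_left (hmass p) (by positivity)
  obtain ⟨g, hg1, hg2⟩ := H.exists_cand hε hε1 hα hN hw hcov
  obtain ⟨j0, rfl⟩ := hen g
  have hJg : (en j0).crit φ T ≤ ε ^ 2 / 16 * F2 - F2 + ε ^ 2 / 16 * ρ ^ 2 := by
    have h1 := (hclose (en j0)).2
    have h2 : 2 * ((∑ i, (en j0).coef i) * (ε ^ 2 / 32 * a * ρ)) ≤ ε ^ 2 / 16 * ρ ^ 2 := by
      calc _ = ε ^ 2 / 16 * ρ * (a * ∑ i, (en j0).coef i) := by ring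
        _ ≤ ε ^ 2 / 16 * ρ * ρ := by
          refine mul_le_mul_of_nonneg_left (le_trans ?_ hSρ) (by positivity)
          exact mul_le_mul_of_nonneg_left hg1 ha.le
        _ = _ := by ring
    have h3 : ε ^ 2 / 16 * (a * ∑ i, α i) ^ 2 ≤ ε ^ 2 / 16 * F2 := by gcongr
    linarith
  have hsel := hn (exists_near_min (J := fun i => (en i).crit φ T)
    (B := -F2 - ε ^ 2 / 16 * ρ ^ 2 - (ε ^ 2 / 16 * ρ) ^ 2) (fun i => by
      have h1 := (hclose (en i)).1
      have h2 := herr (en i)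
      have h3 := Real.sq_sqrt (hD0 (en i))
      set e := √(∫ x, (phiNet φ α w x
        - phiNet φ (en i).coef (en i).dir x) ^ 2 ∂(_root_.stdGaussian d))
      nlinarith [sq_nonneg (e - ε ^ 2 / 16 * ρ), sq_nonneg (ε ^ 2 / 16 * ρ), sq_nonneg e])
    (by positivity) (by linarith) ⟨j0, by
      have : ε ^ 2 * F2 < F2 := by nlinarith
      have : ε ^ 2 * σ ^ 2 ≤ σ ^ 2 := by nlinarith [sq_nonneg σ]
      have : 0 < ε ^ 2 * F2 := by positivity
      have : 0 ≤ ε ^ 2 * σ ^ 2 := by positivity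
      rw [hρ2] at hJg
      linarith⟩) j0
  have h1 := (hclose (en n)).1
  have h2 := herr (en n)
  have h3 := Real.sq_sqrt (hD0 (en n))
  set e := √(∫ x, (phiNet φ α w x
    - phiNet φ (en n).coef (en n).dir x) ^ 2 ∂(_root_.stdGaussian d))
  have h4 := mul_le_mul_of_nonneg_left hJg (show (0 : ℝ) ≤ 1 - ε ^ 2 / 8 by linarith)
  have h5 : ε ^ 2 / 16 * ρ * e ≤ e ^ 2 / 2 + ε ^ 2 / 512 * ρ ^ 2 := by
    have h6 : (ε ^ 2 / 16 * ρ) ^ 2 ≤ ε ^ 2 / 256 * ρ ^ 2 := by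
      have : ε ^ 2 * ε ^ 2 ≤ ε ^ 2 * 1 := by gcongr
      nlinarith [sq_nonneg ρ]
    nlinarith [sq_nonneg (e - ε ^ 2 / 16 * ρ)]
  have h7 : F2 ≤ ρ ^ 2 := by nlinarith [sq_nonneg σ]
  have h8 : 0 ≤ ε ^ 2 * ρ ^ 2 := by positivity
  have h9 : ε ^ 2 * F2 ≤ ε ^ 2 * ρ ^ 2 := by gcongr
  have h10 : 0 ≤ ε ^ 2 / 8 * (ε ^ 2 / 16 * F2 + ε ^ 2 / 16 * ρ ^ 2) := by positivity
  have h11 : ε ^ 2 * ρ ^ 2 = ε ^ 2 * σ ^ 2 + ε ^ 2 * F2 := by rw [hρ2]; ring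
  nlinarith

end Act

/-! ### The estimator and its failure probability -/

/-- Median over `2 d` blocks of `b` samples of the empirical mean of `y φ⟨v, x⟩`. -/
noncomputable def robustCorr (φ : ℝ → ℝ) {d b : ℕ} (med : (Fin (2 * d) → ℝ) → ℝ)
    (s : Fin (2 * d * b) → (Fin d → ℝ) × ℝ) (v : Fin d → ℝ) : ℝ :=
  med fun i => (∑ l : Fin b, (s (finProdFinEquiv (i, l))).2
    * φ (∑ j, v j * (s (finProdFinEquiv (i, l))).1 j)) / b

lemma measurable_robustCorr {φ : ℝ → ℝ} (hφ : Continuous φ) {d b : ℕ}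
    {med : (Fin (2 * d) → ℝ) → ℝ} (hmed : Measurable med) (v : Fin d → ℝ) :
    Measurable fun s : Fin (2 * d * b) → (Fin d → ℝ) × ℝ => robustCorr φ med s v := by
  unfold robustCorr
  have hφm := hφ.measurable
  refine hmed.comp (measurable_pi_lambda _ fun i => ?_)
  fun_prop

/-- A block size of order `x ^ 5`; the constants are absorbed in the power of `x ≥ 49 / 48`. -/
lemma exists_block_size {x : ℝ} (hx : 49 / 48 ≤ x) :
    ∃ b : ℕ, 0 < b ∧ 1572864000 * x ^ 5 ≤ b ∧ 2 * (b : ℝ) ≤ x ^ 1200 := by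
  have hx1 : 1 ≤ x := by linarith
  have h5 : 1 ≤ x ^ 5 := one_le_pow₀ hx1
  refine ⟨⌈1572864000 * x ^ 5⌉₊, Nat.ceil_pos.2 (by positivity), Nat.le_ceil _, ?_⟩
  have h1 := (Nat.ceil_lt_add_one (show 0 ≤ 1572864000 * x ^ 5 by positivity)).le
  have h2 : (3200000000 : ℝ) ≤ x ^ 1195 := by
    calc (3200000000 : ℝ) ≤ ((49 / 48) ^ 239) ^ 5 := by
          have h3 : (100 : ℝ) ≤ (49 / 48) ^ 239 := by norm_num
          exact le_trans (by norm_num) (pow_le_pow_left₀ (by norm_num) h3 5)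
      _ = (49 / 48) ^ 1195 := by rw [← pow_mul]
      _ ≤ x ^ 1195 := by gcongr
  calc 2 * (⌈1572864000 * x ^ 5⌉₊ : ℝ) ≤ 3200000000 * x ^ 5 := by linarith
    _ ≤ x ^ 1195 * x ^ 5 := by gcongr
    _ = x ^ 1200 := by rw [← pow_add]

/-- Union bound over the net: the robust correlations are simultaneously accurate. -/
lemma Act.bad_event_le {φ : ℝ → ℝ} {a K : ℝ} {d k b : ℕ} (H : Act φ a K) (hd : 1 ≤ d)
    (hk : 1 ≤ k) {ε σ : ℝ} (hε : 0 < ε) (hσ : 0 ≤ σ) {α : Fin k → ℝ}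
    {w : Fin k → Fin d → ℝ} (hα : ∀ i, 0 < α i) (hw : ∀ i, ∑ j, w i j ^ 2 = 1)
    {ν : Measure ℝ} (hν : IsZeroMeanSubgaussian ν σ) {N : Finset (Fin d → ℝ)}
    (hN : ∀ v ∈ N, ∑ j, v j ^ 2 = 1) (hcard : (N.card : ℝ) ≤ (3 / (ε / (8 * K))) ^ d)
    (hb0 : 0 < b) (hb : 1572864000 * (K / ε) ^ 5 ≤ b) {med : (Fin (2 * d) → ℝ) → ℝ}
    (hmed : ∀ (z : Fin (2 * d) → ℝ) (c τ : ℝ),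
      d < (univ.filter fun i => |z i - c| ≤ τ).card → |med z - c| ≤ τ)
    {ρ : ℝ} (hρ : 0 ≤ ρ)
    (hρ2 : ρ ^ 2 = σ ^ 2 + ∫ x, phiNet φ α w x ^ 2 ∂(_root_.stdGaussian d)) :
    sampleMeasure d (2 * d * b) (phiNet φ α w) ν
      (⋃ v ∈ N, {s | ε ^ 2 / 32 * a * ρ < |robustCorr φ med s v
        - ∫ x, phiNet φ α w x * φ (∑ j, v j * x j) ∂(_root_.stdGaussian d)|})
      ≤ ENNReal.ofReal (1 / 10) := by
  have ha := H.pos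
  have hK : 0 < K := by linarith [H.one_le]
  have hS : 0 < ∑ i, α i :=
    Finset.sum_pos (fun i _ => hα i) ⟨⟨0, hk⟩, Finset.mem_univ _⟩
  have hρ0 : 0 < ρ := by
    have h1 := H.sum_sq_le (α := α) hw
    have h2 : 0 < (a * ∑ i, α i) ^ 2 := by positivity
    refine lt_of_le_of_ne hρ fun h => ?_
    rw [← h] at hρ2
    nlinarith [sq_nonneg σ]
  have hν1 : IsProbabilityMeasure ν := hν.1
  have hcn := H.continuous_net α w
  have hφm := H.cont.measurable
  let P : Measure ((Fin d → ℝ) × ℝ) :=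
    Measure.map (fun p : (Fin d → ℝ) × ℝ => (p.1, phiNet φ α w p.1 + p.2))
      ((_root_.stdGaussian d).prod ν)
  have hP : IsProbabilityMeasure P := by
    refine Measure.isProbabilityMeasure_map (Measurable.aemeasurable ?_)
    exact Continuous.measurable (by fun_prop)
  have hb' : (0 : ℝ) < b := by exact_mod_cast hb0
  have hx : 0 < K / ε := by positivity
  have hone : ∀ v ∈ N, sampleMeasure d (2 * d * b) (phiNet φ α w) ν
      {s | ε ^ 2 / 32 * a * ρ < |robustCorr φ med s v
        - ∫ x, phiNet φ α w x * φ (∑ j, v j * x j) ∂(_root_.stdGaussian d)|}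
      ≤ ENNReal.ofReal ((6553600 * (K / ε) ^ 4 / b) ^ d) := fun v hv => by
    obtain ⟨h1, h2, h3⟩ := H.sample_moments hα hw (hN v hv) hσ hν P rfl
    have h := median_of_means P d b hb0 med hmed
      (Z := fun p : (Fin d → ℝ) × ℝ => p.2 * φ (∑ j, v j * p.1 j)) (by fun_prop) h1
      (V := 1600 * K ^ 4 * a ^ 2 * ρ ^ 2) (τ := ε ^ 2 / 32 * a * ρ) (by rw [hρ2]; exact h3)
      (by positivity)
    rw [h2] at h
    refine h.trans (le_of_eq ?_)
    congr 2
    field_simp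
    norm_num
  have hunion : sampleMeasure d (2 * d * b) (phiNet φ α w) ν
      (⋃ v ∈ N, {s | ε ^ 2 / 32 * a * ρ < |robustCorr φ med s v
        - ∫ x, phiNet φ α w x * φ (∑ j, v j * x j) ∂(_root_.stdGaussian d)|})
      ≤ N.card * ENNReal.ofReal ((6553600 * (K / ε) ^ 4 / b) ^ d) := by
    refine (measure_biUnion_finset_le N _).trans ?_
    rw [← nsmul_eq_mul]
    exact Finset.sum_le_card_nsmul _ _ _ hone
  refine hunion.trans ?_
  rw [← ENNReal.ofReal_natCast, ← ENNReal.ofReal_mul (by positivity)]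
  refine ENNReal.ofReal_le_ofReal ?_
  calc (N.card : ℝ) * (6553600 * (K / ε) ^ 4 / b) ^ d
      ≤ (3 / (ε / (8 * K))) ^ d * (6553600 * (K / ε) ^ 4 / b) ^ d := by gcongr
    _ = (157286400 * (K / ε) ^ 5 / b) ^ d := by
        rw [← mul_pow]; congr 1; field_simp; norm_num
    _ ≤ (1 / 10) ^ d := by
        refine pow_le_pow_left₀ (by positivity) ?_ d
        rw [div_le_iff₀ hb']
        linarith
    _ ≤ 1 / 10 := pow_le_of_le_one (by norm_num) (by norm_num) (by omega)

theorem stmt1 :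
    ∃ C0 c0 : ℝ, 0 < C0 ∧ 0 < c0 ∧
      ∀ (φ : ℝ → ℝ) (L C : ℝ), 0 < C →
        (∀ s t : ℝ, |φ s - φ t| ≤ L * |s - t|) → (∀ t, 0 ≤ φ t) →
        C ≤ (∫ t, φ t ∂gaussianReal 0 1) →
        C ≤ (∫ t, φ t * (t ^ 2 - 1) ∂gaussianReal 0 1) →
        Integrable (fun t => φ t ^ 2) (gaussianReal 0 1) →
        ∀ d k : ℕ, 1 ≤ d → 1 ≤ k → ∀ ε σ : ℝ, 0 < ε → ε < 1 → 0 ≤ σ →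
          ∃ m : ℕ,
            (m : ℝ) ≤ d * ((k : ℝ) * (1 + L / C) / ε) ^ C0 ∧
            ∃ A : (Fin m → (Fin d → ℝ) × ℝ) → (Fin k → ℝ) × (Fin k → Fin d → ℝ),
              Measurable A ∧
              (∀ s, (∀ i, 0 < (A s).1 i) ∧ ∀ i, ∑ j, ((A s).2 i j) ^ 2 = 1) ∧
              ∀ (α : Fin k → ℝ) (w : Fin k → Fin d → ℝ),
                (∀ i, 0 < α i) → (∀ i, ∑ j, w i j ^ 2 = 1) →
                ∀ ν : Measure ℝ, IsZeroMeanSubgaussian ν σ →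
                  ENNReal.ofReal (9 / 10) ≤
                    sampleMeasure d m (phiNet φ α w) ν
                      {s | ∫ x, (phiNet φ α w x - phiNet φ (A s).1 (A s).2 x) ^ 2
                              ∂stdGaussian d
                            ≤ ε ^ 2 * (1 + L / C) ^ c0 *
                              (σ ^ 2 + ∫ x, phiNet φ α w x ^ 2 ∂stdGaussian d)} := by
  refine ⟨1200, 1, by norm_num, by norm_num, ?_⟩
  intro φ L C hC hlip h0 h1 h2 _ d k hd hk ε σ hε hε1 hσ
  obtain ⟨H, hK⟩ := act_of_hyp hC hlip h0 h1 h2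
  set a := ∫ t, φ t ∂gaussianReal 0 1
  set K := 1 + L / C
  have hK0 : 0 < K := by linarith
  have hkR : (1 : ℝ) ≤ k := by exact_mod_cast hk
  have hx : 49 / 48 ≤ K / ε := by
    rw [le_div_iff₀ hε]
    nlinarith
  obtain ⟨b, hb0, hb, hb2⟩ := exists_block_size hx
  obtain ⟨med, hmedm, hmed⟩ := exists_median d hd
  obtain ⟨N, hN, hcov, hcard⟩ := exists_net d (δ := ε / (8 * K)) (by positivity)
    (by rw [div_le_one (by positivity)]; linarith)
  have hNne : Nonempty N := by
    obtain ⟨v, hv, -⟩ := hcov (fun j => if j = ⟨0, hd⟩ then 1 else 0) (by simp)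
    exact ⟨⟨v, hv⟩⟩
  have hq : Nonempty {q : ℚ // 0 < q} := ⟨⟨1, one_pos⟩⟩
  obtain ⟨en, hen⟩ := exists_surjective_nat (Cand N k)
  obtain ⟨n, hnm, hn⟩ := exists_measurable_selection
    (Ω := Fin (2 * d * b) → (Fin d → ℝ) × ℝ)
    (fun i s => (en i).crit φ (robustCorr φ med s)) (fun i => by
      unfold Cand.crit
      refine measurable_const.sub (Measurable.const_mul ?_ _)
      exact Finset.measurable_sum _ fun l _ =>
        (measurable_robustCorr H.cont hmedm _).const_mul _)
    (ε ^ 2 / 8) (σ ^ 2)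
  refine ⟨2 * d * b, ?_, fun s => ((en (n s)).coef, (en (n s)).dir), ?_, ?_, ?_⟩
  · have hle : (K / ε) ^ (1200 : ℝ) ≤ ((k : ℝ) * K / ε) ^ (1200 : ℝ) := by
      refine Real.rpow_le_rpow (by positivity) ?_ (by norm_num)
      gcongr
      nlinarith
    have hnat : (K / ε) ^ (1200 : ℝ) = (K / ε) ^ 1200 := by
      exact_mod_cast Real.rpow_natCast (K / ε) 1200
    push_cast
    calc (2 : ℝ) * d * b = d * (2 * b) := by ring
      _ ≤ d * ((k : ℝ) * K / ε) ^ (1200 : ℝ) := by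
        gcongr
        exact (hb2.trans hnat.ge).trans hle
  · exact (measurable_of_countable fun i : ℕ => ((en i).coef, (en i).dir)).comp hnm
  · exact fun s => ⟨(en (n s)).coef_pos, (en (n s)).dir_unit hN⟩
  · intro α w hα hw ν hν
    have hν1 : IsProbabilityMeasure ν := hν.1
    set F2 := ∫ x, phiNet φ α w x ^ 2 ∂(_root_.stdGaussian d) with hF2
    have hF0 : 0 ≤ F2 := integral_nonneg fun x => sq_nonneg _
    have hρ2 : √(σ ^ 2 + F2) ^ 2 = σ ^ 2 + F2 := Real.sq_sqrt (by positivity)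
    have hbad := H.bad_event_le hd hk hε hσ hα hw hν hN hcard hb0 hb hmed
      (Real.sqrt_nonneg _) hρ2
    have hprob : IsProbabilityMeasure (sampleMeasure d (2 * d * b) (phiNet φ α w) ν) := by
      have hcn := H.continuous_net α w
      have : IsProbabilityMeasure
          (Measure.map (fun p : (Fin d → ℝ) × ℝ => (p.1, phiNet φ α w p.1 + p.2))
            ((_root_.stdGaussian d).prod ν)) := by
        refine Measure.isProbabilityMeasure_map (Measurable.aemeasurable ?_)
        exact Continuous.measurable (by fun_prop)
      unfold sampleMeasure
      infer_instance
    -- every sample outside the bad event yields a good output, so the two sets cover everything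
    refine ENNReal.le_of_add_le_add_right (a := ENNReal.ofReal (1 / 10)) ENNReal.ofReal_ne_top ?_
    refine le_trans ?_ (add_le_add_right hbad _)
    refine le_trans ?_ (measure_union_le _ _)
    rw [← ENNReal.ofReal_add (by norm_num) (by norm_num)]
    norm_num only [ENNReal.ofReal_one]
    rw [← measure_univ (μ := sampleMeasure d (2 * d * b) (phiNet φ α w) ν)]
    refine measure_mono fun s _ => ?_
    by_contra hs
    rw [Set.mem_union, not_or] at hs
    refine hs.1 ?_
    have hgood : ∀ v ∈ N, |robustCorr φ med s v
        - ∫ x, phiNet φ α w x * φ (∑ j, v j * x j) ∂(_root_.stdGaussian d)|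
        ≤ ε ^ 2 / 32 * a * √(σ ^ 2 + F2) := fun v hv => by
      by_contra hlt
      exact hs.2 (Set.mem_biUnion hv (not_le.1 hlt))
    have h := H.risk_le hε hε1 hk hα hN hw hcov (Real.sqrt_nonneg _) hρ2 hgood hen (hn s)
    rw [hρ2] at h
    refine h.trans ?_
    rw [Real.rpow_one]
    have : ε ^ 2 * 1 ≤ ε ^ 2 * K := by gcongr; exact H.one_le
    rw [mul_one] at this
    gcongr
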